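/- arXiv:2111.03955 — 4 statements merged into one kernel-verified Lean document; each statement's English description precedes it below -/
import Mathlib

section
/- Let d ≥ 1, let A be a real d×d matrix with det A = 1, and let φ : ℝ^d → ℝ^d be continuously differentiable, bounded, with bounded derivative, such that det(A + Dφ(ξ)) = 1 for every ξ ∈ ℝ^d. Then the map Φ(ξ) = Aξ + φ(ξ) is a bijection of ℝ^d whose inverse is continuously differentiable, Φ preserves Lebesgue measure (the pushforward of Lebesgue measure under Φ is Lebesgue measure), and the inverse map has the form Φ⁻¹(x) = A⁻¹x − g(x) where g : ℝ^d → ℝ^d is bounded and continuously differentiable with bounded derivative. -/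
open MeasureTheory

/-!
Since `φ` is bounded, `Φ = L + φ` is proper; since its derivative is invertible, it is a local
homeomorphism. A proper local homeomorphism is a covering map, and a connected covering of a simply
connected space is trivial, so `Φ` is a homeomorphism, with `C¹` inverse by the inverse function
theorem, and the change of variables formula shows that `Φ` preserves the measure. Applying `L⁻¹`
to `x = L ξ + φ ξ` gives `L⁻¹ x - Φ⁻¹ x = L⁻¹ (φ ξ)`, which is bounded. The derivatives of `Φ⁻¹`
are inverses of operators in the compact set `{‖T‖ ≤ R, |det T| = 1}`, on which inversion is
continuous, hence bounded.
-/

section Covering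

variable {X Y : Type*} [TopologicalSpace X] [TopologicalSpace Y] {f : X → Y}

theorem finite_preimage_singleton_of_isProperMap [T1Space Y] (hf : IsLocalHomeomorph f)
    (hproper : IsProperMap f) (y : Y) : (f ⁻¹' {y}).Finite := by
  refine (hproper.isCompact_preimage isCompact_singleton).finite ?_
  refine IsDiscrete.of_openPartialHomeomorph f subset_rfl fun x _ => ?_
  obtain ⟨e, hx, he⟩ := hf x
  exact ⟨e, hx, he.symm⟩

theorem isCoveringMap_of_isProperMap [T2Space X] [T1Space Y] (hf : IsLocalHomeomorph f)
    (hproper : IsProperMap f) : IsCoveringMap f :=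
  isCoveringMap_iff_isCoveringMapOn_univ.mpr <|
    hproper.isClosedMap.isCoveringMapOn_of_isLocalHomeomorphOn
      (fun y _ => finite_preimage_singleton_of_isProperMap hf hproper y)
      (hf.isLocalHomeomorphOn.mono (Set.subset_univ _))

theorem bijective_of_isCoveringMap [ConnectedSpace X] [SimplyConnectedSpace Y]
    [LocallyPathConnectedSpace Y] (hf : IsCoveringMap f) : Function.Bijective f := by
  obtain ⟨x₀⟩ : Nonempty X := inferInstance
  obtain ⟨s, ⟨hs₀, hfs⟩, -⟩ :=
    hf.existsUnique_continuousMap_lifts (ContinuousMap.id Y) (f x₀) x₀ rfl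
  have hright : Function.RightInverse s f := congrFun hfs
  -- `s ∘ f` and the identity both lift `f` and agree at `x₀`.
  have hleft : s ∘ f = id :=
    hf.eq_of_comp_eq (s.continuous.comp hf.continuous) continuous_id
      (funext fun x => hright (f x)) x₀ hs₀
  exact ⟨Function.LeftInverse.injective (congrFun hleft), hright.surjective⟩

end Covering

theorem isProperMap_add_of_bounded {X F : Type*} [TopologicalSpace X] [NormedAddCommGroup F]
    [ProperSpace F] {f φ : X → F} (hf : IsProperMap f) (hφ : Continuous φ) {M : ℝ}
    (hM : ∀ x, ‖φ x‖ ≤ M) : IsProperMap fun x => f x + φ x := by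
  refine isProperMap_iff_tendsto_cocompact.mpr ⟨hf.continuous.add hφ, ?_⟩
  have hf_norm := (isProperMap_iff_tendsto_cocompact.mp hf).2
  rw [← Metric.cobounded_eq_cocompact, ← tendsto_norm_atTop_iff_cobounded] at hf_norm ⊢
  refine Filter.tendsto_atTop_mono (fun x => ?_)
    (Filter.tendsto_atTop_add_const_right _ (-M) hf_norm)
  calc ‖f x‖ + -M ≤ ‖f x‖ - ‖φ x‖ := by linarith [hM x]
    _ ≤ ‖f x + φ x‖ := norm_sub_le_norm_add _ _

section InverseFunction

variable {𝕜 E F : Type*} [NormedAddCommGroup E] [NormedAddCommGroup F] {n : WithTop ℕ∞}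

theorem isLocalHomeomorph_of_isInvertible_fderiv [RCLike 𝕜] [NormedSpace 𝕜 E]
    [NormedSpace 𝕜 F] [CompleteSpace E] {f : E → F} {f' : E → E →L[𝕜] F} (hf : ContDiff 𝕜 n f)
    (hn : n ≠ 0) (hf' : ∀ x, HasFDerivAt f (f' x) x) (hinv : ∀ x, (f' x).IsInvertible) :
    IsLocalHomeomorph f := by
  choose e he using hinv
  simp only [← he] at hf'
  exact IsLocalHomeomorph.mk f fun x =>
    ⟨hf.contDiffAt.toOpenPartialHomeomorph f (hf' x) hn,
      hf.contDiffAt.mem_toOpenPartialHomeomorph_source (hf' x) hn, fun _ _ => rfl⟩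

variable [NontriviallyNormedField 𝕜] [NormedSpace 𝕜 E] [NormedSpace 𝕜 F] {h : E ≃ₜ F}

theorem contDiff_homeomorph_symm_of_isInvertible [CompleteSpace E] {f' : E → E →L[𝕜] F}
    (hh : ContDiff 𝕜 n h) (hf' : ∀ x, HasFDerivAt h (f' x) x)
    (hinv : ∀ x, (f' x).IsInvertible) : ContDiff 𝕜 n h.symm := by
  choose e he using hinv
  simp only [← he] at hf'
  exact h.contDiff_symm hf' hh

theorem hasFDerivAt_homeomorph_symm_of_isInvertible {T : E →L[𝕜] F} {y : F}
    (hT : HasFDerivAt h T (h.symm y)) (hinv : T.IsInvertible) :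
    HasFDerivAt h.symm T.inverse y := by
  obtain ⟨e, rfl⟩ := hinv
  rw [ContinuousLinearMap.inverse_equiv]
  exact h.toOpenPartialHomeomorph.hasFDerivAt_symm (Set.mem_univ y) hT

end InverseFunction

/-- A form of **Hadamard's global inverse function theorem**. -/
theorem exists_homeomorph_of_isProperMap {E F : Type*} [NormedAddCommGroup E] [NormedSpace ℝ E]
    [CompleteSpace E] [NormedAddCommGroup F] [NormedSpace ℝ F] {n : WithTop ℕ∞} {f : E → F}
    {f' : E → E →L[ℝ] F} (hf : ContDiff ℝ n f) (hn : n ≠ 0) (hf' : ∀ x, HasFDerivAt f (f' x) x)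
    (hinv : ∀ x, (f' x).IsInvertible) (hproper : IsProperMap f) : ∃ h : E ≃ₜ F, ⇑h = f := by
  have hlocal : IsLocalHomeomorph f := isLocalHomeomorph_of_isInvertible_fderiv hf hn hf' hinv
  exact ⟨hlocal.toHomeomorphOfBijective
    (bijective_of_isCoveringMap (isCoveringMap_of_isProperMap hlocal hproper)), rfl⟩

section BoundedPerturbation

variable {𝕜 E F : Type*} [NontriviallyNormedField 𝕜] [NormedAddCommGroup E] [NormedSpace 𝕜 E]
  [NormedAddCommGroup F] [NormedSpace 𝕜 F] (L : E ≃L[𝕜] F)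

theorem hasFDerivAt_equiv_add {φ : E → F} {ξ : E} (hφ : DifferentiableAt 𝕜 φ ξ) :
    HasFDerivAt (fun ξ => L ξ + φ ξ) ((L : E →L[𝕜] F) + fderiv 𝕜 φ ξ) ξ :=
  L.hasFDerivAt.add hφ.hasFDerivAt

theorem norm_symm_sub_le_of_eq_add {M : ℝ} {v x : F} {ξ : E} (hx : x = L ξ + v) (hv : ‖v‖ ≤ M) :
    ‖L.symm x - ξ‖ ≤ ‖(L.symm : F →L[𝕜] E)‖ * M := by
  have hdiff : L.symm x - ξ = L.symm v := by
    rw [hx, map_add, L.symm_apply_apply, add_sub_cancel_left]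
  rw [hdiff]
  exact (L.symm : F →L[𝕜] E).le_of_opNorm_le_of_le le_rfl hv

end BoundedPerturbation

theorem exists_homeomorph_eq_add_of_bounded {E F : Type*} [NormedAddCommGroup E] [NormedSpace ℝ E]
    [NormedAddCommGroup F] [NormedSpace ℝ F] [ProperSpace F] {n : WithTop ℕ∞} (L : E ≃L[ℝ] F)
    {φ : E → F} (hφ : ContDiff ℝ n φ) (hn : n ≠ 0) {M : ℝ} (hM : ∀ ξ, ‖φ ξ‖ ≤ M)
    (hinv : ∀ ξ, ((L : E →L[ℝ] F) + fderiv ℝ φ ξ).IsInvertible) :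
    ∃ h : E ≃ₜ F, (⇑h = fun ξ => L ξ + φ ξ) ∧ ContDiff ℝ n h.symm := by
  have : CompleteSpace E :=
    (completeSpace_congr (e := L.toEquiv) L.isUniformEmbedding).mpr inferInstance
  have hΦ : ContDiff ℝ n fun ξ => L ξ + φ ξ := L.contDiff.add hφ
  have hderiv (ξ : E) := hasFDerivAt_equiv_add L (hφ.differentiable hn ξ)
  have hproper : IsProperMap fun ξ => L ξ + φ ξ :=
    isProperMap_add_of_bounded L.toHomeomorph.isProperMap hφ.continuous hM
  obtain ⟨h, hh⟩ := exists_homeomorph_of_isProperMap hΦ hn hderiv hinv hproper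
  rw [← hh] at hΦ hderiv
  exact ⟨h, hh, contDiff_homeomorph_symm_of_isInvertible hΦ hderiv hinv⟩

section Determinant

variable {𝕜 E : Type*} [NontriviallyNormedField 𝕜] [NormedAddCommGroup E] [NormedSpace 𝕜 E]
  [FiniteDimensional 𝕜 E]

theorem isInvertible_of_det_ne_zero [CompleteSpace 𝕜] {T : E →L[𝕜] E} (hT : T.det ≠ 0) :
    T.IsInvertible :=
  ⟨T.toContinuousLinearEquivOfDetNeZero hT, T.coe_toContinuousLinearEquivOfDetNeZero hT⟩

theorem exists_bound_norm_inverse [ProperSpace 𝕜] (R : ℝ) {c : ℝ} (hc : 0 < c) :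
    ∃ C, ∀ T : E →L[𝕜] E, ‖T‖ ≤ R → c ≤ ‖T.det‖ → ‖T.inverse‖ ≤ C := by
  have : ProperSpace (E →L[𝕜] E) := FiniteDimensional.proper 𝕜 _
  have : CompleteSpace E := FiniteDimensional.complete 𝕜 E
  let K : Set (E →L[𝕜] E) := {T | ‖T‖ ≤ R ∧ c ≤ ‖T.det‖}
  have hK : IsCompact K := by
    refine (isCompact_closedBall 0 R).of_isClosed_subset ?_ fun T hT => by simpa using hT.1
    exact (isClosed_le continuous_norm continuous_const).inter
      (isClosed_le continuous_const ContinuousLinearMap.continuous_det.norm)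
  have hcont : ContinuousOn ContinuousLinearMap.inverse K := fun T hT =>
    have hdet : T.det ≠ 0 := norm_pos_iff.mp (hc.trans_le hT.2)
    ((isInvertible_of_det_ne_zero hdet).contDiffAt_map_inverse (n := 0)).continuousAt
      |>.continuousWithinAt
  obtain ⟨C, hC⟩ := hK.exists_bound_of_continuousOn hcont
  exact ⟨C, fun T hR hdet => hC T ⟨hR, hdet⟩⟩

theorem exists_bound_norm_fderiv_homeomorph_symm [ProperSpace 𝕜] {h : E ≃ₜ E}
    {f' : E → E →L[𝕜] E} {R c : ℝ} (hf' : ∀ x, HasFDerivAt h (f' x) x) (hR : ∀ x, ‖f' x‖ ≤ R)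
    (hc : 0 < c) (hdet : ∀ x, c ≤ ‖(f' x).det‖) : ∃ C, ∀ y, ‖fderiv 𝕜 h.symm y‖ ≤ C := by
  obtain ⟨C, hC⟩ := exists_bound_norm_inverse (𝕜 := 𝕜) (E := E) R hc
  refine ⟨C, fun y => ?_⟩
  have hinv : (f' (h.symm y)).IsInvertible :=
    isInvertible_of_det_ne_zero (norm_pos_iff.mp (hc.trans_le (hdet _)))
  rw [(hasFDerivAt_homeomorph_symm_of_isInvertible (hf' _) hinv).fderiv]
  exact hC _ (hR _) (hdet _)

end Determinant

section Volume

variable {E : Type*} [NormedAddCommGroup E] [NormedSpace ℝ E] [FiniteDimensional ℝ E]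
  [MeasurableSpace E] [BorelSpace E] (μ : Measure E) [μ.IsAddHaarMeasure]

theorem map_eq_self_of_abs_det_eq_one {f : E → E} {f' : E → E →L[ℝ] E}
    (hf : Function.Bijective f) (hf' : ∀ x, HasFDerivAt f (f' x) x)
    (hdet : ∀ x, |(f' x).det| = 1) : Measure.map f μ = μ := by
  have hmap := map_withDensity_abs_det_fderiv_eq_addHaar μ MeasurableSet.univ.nullMeasurableSet
    (fun x _ => (hf' x).hasFDerivWithinAt) hf.injective.injOn
  simpa only [hdet, ENNReal.ofReal_one, Measure.restrict_univ, Set.image_univ,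
    hf.surjective.range_eq, ← Pi.one_def, withDensity_one] using hmap

theorem stmt0_general (L : E ≃L[ℝ] E) (φ : E → E) (hφ : ContDiff ℝ 1 φ)
    (hφbdd : ∃ M : ℝ, ∀ ξ, ‖φ ξ‖ ≤ M) (hφder : ∃ M : ℝ, ∀ ξ, ‖fderiv ℝ φ ξ‖ ≤ M)
    (hdet : ∀ ξ, |((L : E →L[ℝ] E) + fderiv ℝ φ ξ).det| = 1) :
    Function.Bijective (fun ξ => L ξ + φ ξ) ∧
    Measure.map (fun ξ => L ξ + φ ξ) μ = μ ∧
    ∃ g : E → E,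
      ContDiff ℝ 1 g ∧
      (∃ M : ℝ, ∀ x, ‖g x‖ ≤ M) ∧
      (∃ M : ℝ, ∀ x, ‖fderiv ℝ g x‖ ≤ M) ∧
      Function.LeftInverse (fun x => L.symm x - g x) (fun ξ => L ξ + φ ξ) ∧
      Function.RightInverse (fun x => L.symm x - g x) (fun ξ => L ξ + φ ξ) := by
  obtain ⟨M, hM⟩ := hφbdd
  obtain ⟨N, hN⟩ := hφder
  have hinv (ξ : E) : ((L : E →L[ℝ] E) + fderiv ℝ φ ξ).IsInvertible :=
    isInvertible_of_det_ne_zero (abs_pos.mp (hdet ξ ▸ one_pos))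
  have hderiv (ξ : E) :=
    hasFDerivAt_equiv_add L (hφ.differentiable one_ne_zero ξ)
  obtain ⟨h, hh, hsymm⟩ := exists_homeomorph_eq_add_of_bounded L hφ one_ne_zero hM hinv
  rw [← hh] at hderiv ⊢
  obtain ⟨C, hC⟩ := exists_bound_norm_fderiv_homeomorph_symm hderiv
    (fun ξ => (norm_add_le _ _).trans (add_le_add_right (hN ξ) _)) one_pos (fun ξ => (hdet ξ).ge)
  refine ⟨h.bijective, map_eq_self_of_abs_det_eq_one μ h.bijective hderiv hdet,
    fun x => L.symm x - h.symm x, L.symm.contDiff.sub hsymm,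
    ⟨‖(L.symm : E →L[ℝ] E)‖ * M, fun x => ?_⟩, ⟨‖(L.symm : E →L[ℝ] E)‖ + C, fun x => ?_⟩, ?_, ?_⟩
  · exact norm_symm_sub_le_of_eq_add L ((h.apply_symm_apply x).symm.trans (congrFun hh _)) (hM _)
  · rw [fderiv_fun_sub L.symm.differentiableAt (hsymm.differentiable one_ne_zero x),
      L.symm.fderiv]
    exact (norm_sub_le _ _).trans (add_le_add_right (hC x) _)
  · exact fun ξ => by simp only [sub_sub_cancel, h.symm_apply_apply]
  · exact fun x => by simp only [sub_sub_cancel, h.apply_symm_apply]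

end Volume

theorem det_toLin'_add {R ι : Type*} [CommRing R] [Fintype ι] [DecidableEq ι]
    (A : Matrix ι ι R) (B : (ι → R) →ₗ[R] (ι → R)) :
    LinearMap.det (Matrix.toLin' A + B) = (A + LinearMap.toMatrix' B).det := by
  rw [← LinearMap.det_toMatrix', map_add, LinearMap.toMatrix'_toLin']

/-- Let `d ≥ 1`, let `A` be a real `d×d` matrix with `det A = 1`, and let
`φ : ℝ^d → ℝ^d` be continuously differentiable, bounded, with bounded derivative, such that
`det (A + Dφ(ξ)) = 1` for every `ξ`.  Then `Φ(ξ) = Aξ + φ(ξ)` is a bijection of `ℝ^d`,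
`Φ` preserves Lebesgue measure, and the inverse map has the form `Φ⁻¹(x) = A⁻¹x − g(x)`
with `g` bounded, continuously differentiable, with bounded derivative (in particular the
inverse is continuously differentiable). -/
theorem stmt0 (d : ℕ) (hd : 1 ≤ d) (A : Matrix (Fin d) (Fin d) ℝ) (hA : A.det = 1)
    (φ : (Fin d → ℝ) → (Fin d → ℝ)) (hφ : ContDiff ℝ 1 φ)
    (hφbdd : ∃ M : ℝ, ∀ ξ, ‖φ ξ‖ ≤ M)
    (hφder : ∃ M : ℝ, ∀ ξ, ‖fderiv ℝ φ ξ‖ ≤ M)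
    (hdet : ∀ ξ, (A + LinearMap.toMatrix'
        ((fderiv ℝ φ ξ).toLinearMap)).det = 1) :
    Function.Bijective (fun ξ => A.mulVec ξ + φ ξ) ∧
    Measure.map (fun ξ => A.mulVec ξ + φ ξ) volume = volume ∧
    ∃ g : (Fin d → ℝ) → (Fin d → ℝ),
      ContDiff ℝ 1 g ∧
      (∃ M : ℝ, ∀ x, ‖g x‖ ≤ M) ∧
      (∃ M : ℝ, ∀ x, ‖fderiv ℝ g x‖ ≤ M) ∧
      Function.LeftInverse (fun x => A⁻¹.mulVec x - g x) (fun ξ => A.mulVec ξ + φ ξ) ∧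
      Function.RightInverse (fun x => A⁻¹.mulVec x - g x) (fun ξ => A.mulVec ξ + φ ξ) := by
  have hA' : IsUnit A.det := hA ▸ isUnit_one
  exact stmt0_general volume (Matrix.toLin'OfInv (A.nonsing_inv_mul hA')
    (A.mul_nonsing_inv hA')).toContinuousLinearEquiv φ hφ hφbdd hφder
    fun ξ => (congrArg abs ((det_toLin'_add A _).trans (hdet ξ))).trans abs_one
end

section
/- Let s₁ < s₂ be real numbers, let 0 < α < 1, set s = α s₁ + (1 − α) s₂, and let 0 < q < ∞. There exists a constant C, depending only on s₁, s₂, α, q, such that for every sequence (a_j)_{j∈ℤ} of complex numbers: (Σ_{j∈ℤ} 2^{s j q} |a_j|^q)^{1/q} ≤ C · (sup_{j∈ℤ} 2^{s₁ j} |a_j|)^α · (sup_{j∈ℤ} 2^{s₂ j} |a_j|)^{1−α} (with the convention that the left side is finite whenever both suprema on the right are finite). -/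
open scoped ENNReal NNReal

/-!
Suppose both suprema are positive and finite, and write them as `2 ^ u` and `2 ^ v`. Then `|a j|` is
at most `2 ^ U` and at most `2 ^ V`, where `U = u - s₁ j` and `V = v - s₂ j`. The smaller of `U` and
`V` lies below `α U + (1 - α) V` by at least `min α (1 - α) * |U - V|`, and `U - V` is a nonconstant
affine function of `j`. So the weighted sequence is dominated by `2 ^ (α u + (1 - α) v)` times a
two-sided geometric sequence centred at the real number `(u - v) / (s₁ - s₂)`, whose sum is bounded
independently of the centre.
-/

section GeometricSum

variable {r : ℝ≥0∞}

lemma tsum_int_rpow_abs_ne_top (hr : r < 1) : ∑' j : ℤ, r ^ |(j : ℝ)| ≠ ⊤ := by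
  have h_geom : ∑' n : ℕ, r ^ n ≠ ⊤ := by
    rw [ENNReal.tsum_geometric]
    exact ENNReal.inv_ne_top.2 (tsub_pos_of_lt hr).ne'
  have h_nonneg (n : ℕ) : r ^ |((n : ℤ) : ℝ)| = r ^ n := by simp
  have h_neg (n : ℕ) : r ^ |((-(n + 1 : ℤ) : ℤ) : ℝ)| = r * r ^ n := by
    rw [← pow_succ', ← ENNReal.rpow_natCast, Int.cast_neg, abs_neg]
    push_cast
    rw [abs_of_nonneg (by positivity)]
  rw [tsum_of_nat_of_neg_add_one ENNReal.summable ENNReal.summable]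
  simp only [h_nonneg, h_neg, ENNReal.tsum_mul_left]
  exact ENNReal.add_ne_top.2 ⟨h_geom, ENNReal.mul_ne_top hr.ne_top h_geom⟩

lemma tsum_int_rpow_abs_sub_le (hr0 : r ≠ 0) (hr1 : r ≤ 1) (t : ℝ) :
    ∑' j : ℤ, r ^ |(j : ℝ) - t| ≤ r⁻¹ * ∑' j : ℤ, r ^ |(j : ℝ)| := by
  have h_shift (j : ℤ) : r ^ |((j + round t : ℤ) : ℝ) - t| ≤ r⁻¹ * r ^ |(j : ℝ)| := by
    have h_abs : -1 + |(j : ℝ)| ≤ |((j + round t : ℤ) : ℝ) - t| := by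
      have h_tri := abs_sub_abs_le_abs_sub (j : ℝ) (t - round t)
      rw [sub_sub_eq_add_sub] at h_tri
      push_cast
      linarith [abs_sub_round t]
    calc r ^ |((j + round t : ℤ) : ℝ) - t| ≤ r ^ (-1 + |(j : ℝ)|) :=
          ENNReal.rpow_le_rpow_of_exponent_ge hr1 h_abs
      _ = r⁻¹ * r ^ |(j : ℝ)| := by
          rw [ENNReal.rpow_add _ _ hr0 (ne_top_of_le_ne_top ENNReal.one_ne_top hr1),
            ENNReal.rpow_neg_one]
  rw [← (Equiv.addRight (round t)).tsum_eq fun j : ℤ ↦ r ^ |(j : ℝ) - t|, ← ENNReal.tsum_mul_left]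
  exact ENNReal.tsum_le_tsum h_shift

end GeometricSum

lemma min_le_convexComb_sub_min_mul_abs (α U V : ℝ) :
    min U V ≤ α * U + (1 - α) * V - min α (1 - α) * |U - V| := by
  rcases le_total U V with h | h
  · rw [min_eq_left h, abs_of_nonpos (sub_nonpos.2 h)]
    linarith [mul_le_mul_of_nonneg_right (min_le_right α (1 - α)) (sub_nonneg.2 h)]
  · rw [min_eq_right h, abs_of_nonneg (sub_nonneg.2 h)]
    linarith [mul_le_mul_of_nonneg_right (min_le_left α (1 - α)) (sub_nonneg.2 h)]

section Interpolation

variable {b : ℝ≥0∞}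

lemma rpow_mul_le_rpow_iff (hb0 : b ≠ 0) (hbt : b ≠ ⊤) {p u : ℝ} {y : ℝ≥0∞} :
    b ^ p * y ≤ b ^ u ↔ y ≤ b ^ (u - p) := by
  rw [ENNReal.rpow_sub _ _ hb0 hbt, mul_comm, ENNReal.le_div_iff_mul_le
    (.inl (by simp [hb0, hbt])) (.inl (by simp [hb0, hbt]))]

lemma exists_eq_rpow (hb : 1 < b) (hbt : b ≠ ⊤) {y : ℝ≥0∞} (hy0 : y ≠ 0) (hyt : y ≠ ⊤) :
    ∃ u : ℝ, y = b ^ u := by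
  have hb_real : 1 < b.toReal := by
    rwa [← ENNReal.toReal_one, ENNReal.toReal_lt_toReal (by simp) hbt]
  refine ⟨Real.logb b.toReal y.toReal, (ENNReal.toReal_eq_toReal_iff' hyt ?_).1 ?_⟩
  · simp [(zero_lt_one.trans hb).ne', hbt]
  · rw [← ENNReal.toReal_rpow, Real.rpow_logb (by linarith) hb_real.ne'
      (ENNReal.toReal_pos hy0 hyt)]

lemma rpow_convexComb_mul_le (hb : 1 ≤ b) (hbt : b ≠ ⊤) (α : ℝ) {p₁ p₂ u v : ℝ} {y : ℝ≥0∞}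
    (h₁ : b ^ p₁ * y ≤ b ^ u) (h₂ : b ^ p₂ * y ≤ b ^ v) :
    b ^ (α * p₁ + (1 - α) * p₂) * y ≤
      b ^ (α * u + (1 - α) * v - min α (1 - α) * |(u - v) - (p₁ - p₂)|) := by
  have hb0 : b ≠ 0 := (zero_lt_one.trans_le hb).ne'
  rw [rpow_mul_le_rpow_iff hb0 hbt] at h₁ h₂ ⊢
  have h_min : y ≤ b ^ min (u - p₁) (v - p₂) := by
    rcases min_choice (u - p₁) (v - p₂) with h | h <;> rwa [h]
  refine h_min.trans (ENNReal.rpow_le_rpow_of_exponent_le hb ?_)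
  have h_gap := min_le_convexComb_sub_min_mul_abs α (u - p₁) (v - p₂)
  rw [sub_sub_sub_comm] at h_gap
  linarith

lemma rpow_mul_rpow_le_geometric (hb : 1 ≤ b) (hbt : b ≠ ⊤) (α : ℝ) {s₁ s₂ q : ℝ} (hs : s₁ ≠ s₂)
    (hq : 0 ≤ q) {j u v : ℝ} {y : ℝ≥0∞} (h₁ : b ^ (s₁ * j) * y ≤ b ^ u)
    (h₂ : b ^ (s₂ * j) * y ≤ b ^ v) :
    (b ^ ((α * s₁ + (1 - α) * s₂) * j) * y) ^ q ≤
      (b ^ (-(min α (1 - α) * |s₁ - s₂| * q))) ^ |j - (u - v) / (s₁ - s₂)| *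
        (b ^ (α * u + (1 - α) * v)) ^ q := by
  have hb0 : b ≠ 0 := (zero_lt_one.trans_le hb).ne'
  have h_dist : |(u - v) - (s₁ * j - s₂ * j)| = |s₁ - s₂| * |j - (u - v) / (s₁ - s₂)| := by
    rw [← abs_mul, mul_sub, mul_div_cancel₀ _ (sub_ne_zero.2 hs), abs_sub_comm, sub_mul]
  have h_interp := rpow_convexComb_mul_le hb hbt α h₁ h₂
  rw [h_dist] at h_interp
  calc (b ^ ((α * s₁ + (1 - α) * s₂) * j) * y) ^ q
      = (b ^ (α * (s₁ * j) + (1 - α) * (s₂ * j)) * y) ^ q := by ring_nf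
    _ ≤ (b ^ (α * u + (1 - α) * v -
          min α (1 - α) * (|s₁ - s₂| * |j - (u - v) / (s₁ - s₂)|))) ^ q :=
        ENNReal.rpow_le_rpow h_interp hq
    _ = _ := by
        rw [← ENNReal.rpow_mul, ← ENNReal.rpow_mul, ← ENNReal.rpow_mul,
          ← ENNReal.rpow_add _ _ hb0 hbt]
        ring_nf

lemma exists_tsum_rpow_mul_rpow_le (hb : 1 < b) (hbt : b ≠ ⊤) {s₁ s₂ α q : ℝ} (hs : s₁ ≠ s₂)
    (hα0 : 0 < α) (hα1 : α < 1) (hq : 0 < q) :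
    ∃ K : ℝ≥0∞, K ≠ ⊤ ∧ ∀ (x : ℤ → ℝ≥0∞) (u v : ℝ),
      (∀ j : ℤ, b ^ (s₁ * (j : ℝ)) * x j ≤ b ^ u) → (∀ j : ℤ, b ^ (s₂ * (j : ℝ)) * x j ≤ b ^ v) →
      ∑' j : ℤ, (b ^ ((α * s₁ + (1 - α) * s₂) * (j : ℝ)) * x j) ^ q ≤
        K * (b ^ (α * u + (1 - α) * v)) ^ q := by
  have hc : 0 < min α (1 - α) * |s₁ - s₂| * q :=
    mul_pos (mul_pos (lt_min hα0 (sub_pos.2 hα1)) (abs_pos.2 (sub_ne_zero.2 hs))) hq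
  set r := b ^ (-(min α (1 - α) * |s₁ - s₂| * q)) with hr
  have hr0 : r ≠ 0 := by simp [hr, (zero_lt_one.trans hb).ne', hbt]
  have hr1 : r < 1 := ENNReal.rpow_lt_one_of_one_lt_of_neg hb (neg_lt_zero.2 hc)
  refine ⟨r⁻¹ * ∑' j : ℤ, r ^ |(j : ℝ)|,
    ENNReal.mul_ne_top (ENNReal.inv_ne_top.2 hr0) (tsum_int_rpow_abs_ne_top hr1),
    fun x u v hu hv ↦ ?_⟩
  calc ∑' j : ℤ, (b ^ ((α * s₁ + (1 - α) * s₂) * (j : ℝ)) * x j) ^ q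
      ≤ ∑' j : ℤ, r ^ |(j : ℝ) - (u - v) / (s₁ - s₂)| * (b ^ (α * u + (1 - α) * v)) ^ q :=
        ENNReal.tsum_le_tsum fun j ↦
          rpow_mul_rpow_le_geometric hb.le hbt α hs hq.le (hu j) (hv j)
    _ ≤ (r⁻¹ * ∑' j : ℤ, r ^ |(j : ℝ)|) * (b ^ (α * u + (1 - α) * v)) ^ q := by
        rw [ENNReal.tsum_mul_right]
        gcongr
        exact tsum_int_rpow_abs_sub_le hr0 hr1.le _

lemma exists_rpow_tsum_le_mul_rpow_mul_rpow (hb : 1 < b) (hbt : b ≠ ⊤) {s₁ s₂ α q : ℝ}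
    (hs : s₁ ≠ s₂) (hα0 : 0 < α) (hα1 : α < 1) (hq : 0 < q) :
    ∃ K : ℝ≥0∞, K ≠ ⊤ ∧ ∀ (x : ℤ → ℝ≥0∞) (A B : ℝ≥0∞), A ≠ 0 → A ≠ ⊤ → B ≠ 0 → B ≠ ⊤ →
      (∀ j : ℤ, b ^ (s₁ * (j : ℝ)) * x j ≤ A) → (∀ j : ℤ, b ^ (s₂ * (j : ℝ)) * x j ≤ B) →
      (∑' j : ℤ, (b ^ ((α * s₁ + (1 - α) * s₂) * (j : ℝ)) * x j) ^ q) ^ (1 / q) ≤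
        K * A ^ α * B ^ (1 - α) := by
  have hq' : 0 ≤ 1 / q := (one_div_pos.2 hq).le
  obtain ⟨K, hK, h_sum⟩ := exists_tsum_rpow_mul_rpow_le hb hbt hs hα0 hα1 hq
  refine ⟨K ^ (1 / q), ENNReal.rpow_ne_top_of_nonneg hq' hK, fun x A B hA0 hAt hB0 hBt hA hB ↦ ?_⟩
  obtain ⟨u, rfl⟩ := exists_eq_rpow hb hbt hA0 hAt
  obtain ⟨v, rfl⟩ := exists_eq_rpow hb hbt hB0 hBt
  calc (∑' j : ℤ, (b ^ ((α * s₁ + (1 - α) * s₂) * (j : ℝ)) * x j) ^ q) ^ (1 / q)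
      ≤ (K * (b ^ (α * u + (1 - α) * v)) ^ q) ^ (1 / q) :=
        ENNReal.rpow_le_rpow (h_sum x u v hA hB) hq'
    _ = K ^ (1 / q) * b ^ (α * u + (1 - α) * v) := by
        rw [ENNReal.mul_rpow_of_nonneg _ _ hq', one_div, ENNReal.rpow_rpow_inv hq.ne']
    _ = K ^ (1 / q) * (b ^ u) ^ α * (b ^ v) ^ (1 - α) := by
        rw [ENNReal.rpow_add _ _ (zero_lt_one.trans hb).ne' hbt, mul_comm α, mul_comm (1 - α),
          ENNReal.rpow_mul, ENNReal.rpow_mul, mul_assoc]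

lemma iSup_rpow_mul_ne_zero (hb0 : b ≠ 0) (hbt : b ≠ ⊤) (s : ℝ) {x : ℤ → ℝ≥0∞} (hx : x ≠ 0) :
    ⨆ j : ℤ, b ^ (s * (j : ℝ)) * x j ≠ 0 := by
  obtain ⟨j, hj⟩ := Function.ne_iff.1 hx
  have h_term : b ^ (s * (j : ℝ)) * x j ≠ 0 := mul_ne_zero (by simp [hb0, hbt]) hj
  exact fun h ↦ h_term (ENNReal.iSup_eq_zero.1 h j)

end Interpolation

lemma mul_rpow_mul_rpow_eq_top {C A B : ℝ≥0∞} {α β : ℝ} (hα : 0 < α) (hβ : 0 < β) (hC : C ≠ 0)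
    (hA : A ≠ 0) (hB : B ≠ 0) (h : A = ⊤ ∨ B = ⊤) : C * A ^ α * B ^ β = ⊤ := by
  rcases h with rfl | rfl
  · rw [ENNReal.top_rpow_of_pos hα, ENNReal.mul_top hC,
      ENNReal.top_mul (by simp [hB, hβ.le])]
  · rw [ENNReal.top_rpow_of_pos hβ,
      ENNReal.mul_top (mul_ne_zero hC (by simp [hA, hα.le]))]

theorem stmt2_general {b : ℝ≥0∞} (hb : 1 < b) (hbt : b ≠ ⊤) {s₁ s₂ α q : ℝ} (hs : s₁ ≠ s₂)
    (hα0 : 0 < α) (hα1 : α < 1) (hq : 0 < q) :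
    ∃ C : ℝ, 0 < C ∧ ∀ x : ℤ → ℝ≥0∞,
      (∑' j : ℤ, (b ^ ((α * s₁ + (1 - α) * s₂) * (j : ℝ)) * x j) ^ q) ^ (1 / q) ≤
        ENNReal.ofReal C * (⨆ j : ℤ, b ^ (s₁ * (j : ℝ)) * x j) ^ α *
          (⨆ j : ℤ, b ^ (s₂ * (j : ℝ)) * x j) ^ (1 - α) := by
  have hb0 : b ≠ 0 := (zero_lt_one.trans hb).ne'
  obtain ⟨K, hK, h_bound⟩ := exists_rpow_tsum_le_mul_rpow_mul_rpow hb hbt hs hα0 hα1 hq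
  have hC_pos : 0 < K.toReal + 1 := by positivity
  have hKC : K ≤ ENNReal.ofReal (K.toReal + 1) :=
    (ENNReal.le_ofReal_iff_toReal_le hK hC_pos.le).2 (le_add_of_nonneg_right zero_le_one)
  refine ⟨K.toReal + 1, hC_pos, fun x ↦ ?_⟩
  rcases eq_or_ne x 0 with rfl | hx
  · simp [hq]
  have hA0 := iSup_rpow_mul_ne_zero hb0 hbt s₁ hx
  have hB0 := iSup_rpow_mul_ne_zero hb0 hbt s₂ hx
  by_cases h_top :
      (⨆ j : ℤ, b ^ (s₁ * (j : ℝ)) * x j) = ⊤ ∨ (⨆ j : ℤ, b ^ (s₂ * (j : ℝ)) * x j) = ⊤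
  · rw [mul_rpow_mul_rpow_eq_top hα0 (sub_pos.2 hα1) (ENNReal.ofReal_pos.2 hC_pos).ne' hA0 hB0
      h_top]
    exact le_top
  · obtain ⟨hAt, hBt⟩ := not_or.1 h_top
    refine (h_bound x _ _ hA0 hAt hB0 hBt (le_iSup (fun j : ℤ ↦ b ^ (s₁ * (j : ℝ)) * x j))
      (le_iSup (fun j : ℤ ↦ b ^ (s₂ * (j : ℝ)) * x j))).trans ?_
    gcongr

/-- **Oru's lemma.** Weighted `ℓ^q`–`ℓ^∞` interpolation for two-sided
sequences: with `s = α s₁ + (1−α) s₂`, `s₁ < s₂`, `0 < α < 1`, `0 < q < ∞`,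
`(Σ_j 2^{s j q} |a_j|^q)^{1/q} ≤ C (sup_j 2^{s₁ j} |a_j|)^α (sup_j 2^{s₂ j} |a_j|)^{1−α}`. -/
theorem stmt2 (s₁ s₂ α q : ℝ) (h12 : s₁ < s₂) (hα0 : 0 < α) (hα1 : α < 1) (hq : 0 < q) :
    ∃ C : ℝ, 0 < C ∧ ∀ a : ℤ → ℂ,
      (∑' j : ℤ, ((2 : ℝ≥0∞) ^ ((α * s₁ + (1 - α) * s₂) * (j : ℝ)) * (‖a j‖₊ : ℝ≥0∞)) ^ q)
          ^ (1 / q)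
        ≤ ENNReal.ofReal C *
            (⨆ j : ℤ, (2 : ℝ≥0∞) ^ (s₁ * (j : ℝ)) * (‖a j‖₊ : ℝ≥0∞)) ^ α *
            (⨆ j : ℤ, (2 : ℝ≥0∞) ^ (s₂ * (j : ℝ)) * (‖a j‖₊ : ℝ≥0∞)) ^ (1 - α) :=
  let ⟨C, hC, h⟩ := stmt2_general ENNReal.one_lt_two ENNReal.ofNat_ne_top h12.ne hα0 hα1 hq
  ⟨C, hC, fun a ↦ h fun j ↦ ‖a j‖₊⟩
end

section
/- Let d ≥ 1, 0 < r < 1, and 2 ≤ p < ∞, and let a be a symbol of class S⁰_ph on ℝ^d. There exists a constant C, depending only on d, r, p and a, such that for every Schwartz function f on ℝ^d the Gagliardo seminorm of 𝔞[f] satisfies [𝔞[f]]_{r,p} ≤ C · [f]_{r,p}. -/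
open MeasureTheory ENNReal
open scoped RealInnerProductSpace

noncomputable section

/-- Shorthand for Euclidean space `ℝ^d`. -/
abbrev Ed (d : ℕ) := EuclideanSpace ℝ (Fin d)

/-- The homogeneous Besov (Gagliardo) seminorm `[f]_{r,p}`. -/
def gagliardo (d : ℕ) (r p : ℝ) {F : Type*} [NormedAddCommGroup F] (f : Ed d → F) : ℝ≥0∞ :=
  (∫⁻ x, ∫⁻ y, (‖f x - f y‖₊ : ℝ≥0∞) ^ p / (‖x - y‖₊ : ℝ≥0∞) ^ (r * p + d)) ^ (1 / p)

/-- The homogeneous Hölder seminorm `{f}_r`. -/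
def holderSemi (d : ℕ) (r : ℝ) {F : Type*} [NormedAddCommGroup F] (f : Ed d → F) : ℝ≥0∞ :=
  ⨆ x, ⨆ y, (‖f x - f y‖₊ : ℝ≥0∞) / (‖x - y‖₊ : ℝ≥0∞) ^ r

/-- The Fourier transform `f̂(κ) = ∫ e^{-i x·κ} f(x) dx`. -/
def ftransform (d : ℕ) (f : Ed d → ℂ) (κ : Ed d) : ℂ :=
  ∫ x, Complex.exp (-(Complex.I * (⟪x, κ⟫ : ℂ))) * f x

/-- The homogeneous Sobolev seminorm `[f]_θ = ((2π)^{-d} ∫ |κ|^{2θ} |f̂(κ)|² dκ)^{1/2}`. -/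
def sobolevSemi (d : ℕ) (θ : ℝ) (f : Ed d → ℂ) : ℝ≥0∞ :=
  (ENNReal.ofReal ((2 * Real.pi) ^ (-(d : ℝ))) *
    ∫⁻ κ, (‖κ‖₊ : ℝ≥0∞) ^ (2 * θ) * (‖ftransform d f κ‖₊ : ℝ≥0∞) ^ (2 : ℕ)) ^ ((1 : ℝ) / 2)

/-- A symbol of class `S⁰_{ph}`: smooth away from the origin and positively
homogeneous of degree `0`. -/
def IsSymbol0 (d : ℕ) (a : Ed d → ℂ) : Prop :=
  ContDiffOn ℝ (⊤ : ℕ∞) a {0}ᶜ ∧ ∀ (c : ℝ) (κ : Ed d), 0 < c → κ ≠ 0 → a (c • κ) = a κ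

/-- The operator `𝔞[f](x) = (2π)^{-d} ∫ e^{i x·κ} a(κ) f̂(κ) dκ` associated with a symbol. -/
def symbOp (d : ℕ) (a : Ed d → ℂ) (f : Ed d → ℂ) (x : Ed d) : ℂ :=
  (((2 * Real.pi) ^ (-(d : ℝ)) : ℝ) : ℂ) *
    ∫ κ, Complex.exp (Complex.I * (⟪x, κ⟫ : ℂ)) * a κ * ftransform d f κ

/-- The partial derivative `∂_i f(x)`. -/
def pd (d : ℕ) (i : Fin d) (f : Ed d → ℝ) (x : Ed d) : ℝ :=
  fderiv ℝ f x (EuclideanSpace.single i 1)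

/-- The half-wave propagator `(e^{itD} g)(x) = (2π)^{-d} ∫ e^{i x·κ} e^{i t|κ|} ĝ(κ) dκ`. -/
def halfWave (d : ℕ) (t : ℝ) (g : Ed d → ℂ) (x : Ed d) : ℂ :=
  (((2 * Real.pi) ^ (-(d : ℝ)) : ℝ) : ℂ) *
    ∫ κ, Complex.exp (Complex.I * ((⟪x, κ⟫ : ℂ) + (t : ℂ) * ((‖κ‖ : ℝ) : ℂ))) *
      ftransform d g κ

end

/-!
By homogeneity `a(ξ) = ∫₀^∞ m(tξ) dt/t` for a Schwartz function `m` supported in an annulus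
(Calderón), so that `𝔞[f] = ∫₀^∞ K_t ⋆ f dt/t` where `K_t(z) = t⁻ⁿ K(z/t)` and `K` is the inverse
Fourier transform of `m`. As `m(0) = 0`, the kernels `K_t` have mean zero, and `K_t ⋆ f` only sees
increments of `f`. Bounding the increment of `K_t ⋆ f` between `x - h` and `x` by the size of `K_t`
when `t ≤ |h|` and by its smoothness when `|h| ≤ t`, and integrating in `t`, one gets

  `|𝔞[f](x) - 𝔞[f](x - h)| ≤ A (S(x, h) + S(x - h, h))`,
  `S(x, h) = ∫ |z|⁻ⁿ min(1, |h|/|z|) |f(x) - f(x - z)| dz`.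

For `0 < r < 1` the Schur test with weight `|z|^r` bounds the `L^p` norm of `S(x, h)` over `(x, h)`,
with respect to the Gagliardo weight, by that of `f(x) - f(x - z)` over `(x, z)`.
-/

open Set Module Convolution FourierTransform SchwartzMap
open ContinuousLinearMap (lsmul)
open scoped NNReal BoundedContinuousFunction

section Schur

variable {α β : Type*} [MeasurableSpace α] [MeasurableSpace β] {μ : Measure α} {ν : Measure β}

theorem rpow_lintegral_mul_le {p : ℝ} (hp : 1 ≤ p) {k φ g : β → ℝ≥0∞}
    (hk : AEMeasurable k ν) (hφ : AEMeasurable φ ν) (hg : AEMeasurable g ν)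
    (hφ₀ : ∀ᵐ y ∂ν, φ y ≠ 0) (hφ' : ∀ᵐ y ∂ν, φ y ≠ ∞) :
    (∫⁻ y, k y * g y ∂ν) ^ p ≤
      (∫⁻ y, k y * φ y ∂ν) ^ (p - 1) * ∫⁻ y, k y * (g y ^ p * φ y ^ (1 - p)) ∂ν := by
  have hp₀ : 0 < p := by linarith
  have hp' : 0 ≤ 1 - p⁻¹ := sub_nonneg.2 (inv_le_one_of_one_le₀ hp)
  have hsplit : ∀ᵐ y ∂ν, k y * g y =
      (k y * φ y) ^ (1 - p⁻¹) * (k y * (g y ^ p * φ y ^ (1 - p))) ^ p⁻¹ := by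
    filter_upwards [hφ₀, hφ'] with y hy₀ hy'
    have hk_split : k y ^ (1 - p⁻¹) * k y ^ p⁻¹ = k y := by
      rw [← ENNReal.rpow_add_of_nonneg _ _ hp' (by positivity), sub_add_cancel, ENNReal.rpow_one]
    have hφ_cancel : φ y ^ (1 - p⁻¹) * φ y ^ ((1 - p) * p⁻¹) = 1 := by
      rw [← ENNReal.rpow_add _ _ hy₀ hy', sub_mul, mul_inv_cancel₀ hp₀.ne', one_mul,
        sub_add_sub_cancel, sub_self, ENNReal.rpow_zero]
    calc k y * g y = (k y ^ (1 - p⁻¹) * k y ^ p⁻¹) * g y *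
          (φ y ^ (1 - p⁻¹) * φ y ^ ((1 - p) * p⁻¹)) := by rw [hk_split, hφ_cancel, mul_one]
      _ = _ := by
        rw [ENNReal.mul_rpow_of_nonneg _ _ hp', ENNReal.mul_rpow_of_nonneg _ _ (by positivity),
          ENNReal.mul_rpow_of_nonneg _ _ (by positivity), ENNReal.rpow_rpow_inv hp₀.ne',
          ← ENNReal.rpow_mul]
        ring
  calc (∫⁻ y, k y * g y ∂ν) ^ p
      ≤ ((∫⁻ y, k y * φ y ∂ν) ^ (1 - p⁻¹) *
          (∫⁻ y, k y * (g y ^ p * φ y ^ (1 - p)) ∂ν) ^ p⁻¹) ^ p := by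
        rw [lintegral_congr_ae hsplit]
        gcongr
        exact ENNReal.lintegral_mul_norm_pow_le (hk.mul hφ)
          (hk.mul ((hg.pow_const p).mul (hφ.pow_const _))) hp' (by positivity)
          (sub_add_cancel 1 p⁻¹)
    _ = _ := by
        rw [ENNReal.mul_rpow_of_nonneg _ _ hp₀.le, ENNReal.rpow_inv_rpow hp₀.ne',
          ← ENNReal.rpow_mul, sub_mul, one_mul, inv_mul_cancel₀ hp₀.ne']

theorem lintegral_rpow_lintegral_mul_le_of_schur [SFinite μ] [SFinite ν] {p : ℝ} (hp : 1 ≤ p)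
    {k : α → β → ℝ≥0∞} (hk : Measurable (Function.uncurry k))
    {φ : β → ℝ≥0∞} (hφ : Measurable φ) (hφ₀ : ∀ᵐ y ∂ν, φ y ≠ 0) (hφ' : ∀ᵐ y ∂ν, φ y ≠ ∞)
    {ψ w : α → ℝ≥0∞} (hψ : Measurable ψ) (hw : Measurable w) {v : β → ℝ≥0∞}
    (hkφ : ∀ᵐ x ∂μ, ∫⁻ y, k x y * φ y ∂ν ≤ ψ x)
    (hkψ : ∀ᵐ y ∂ν, ∫⁻ x, k x y * (ψ x ^ (p - 1) * w x) ∂μ ≤ v y * φ y ^ (p - 1))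
    {g : β → ℝ≥0∞} (hg : Measurable g) :
    ∫⁻ x, (∫⁻ y, k x y * g y ∂ν) ^ p * w x ∂μ ≤ ∫⁻ y, g y ^ p * v y ∂ν := by
  calc ∫⁻ x, (∫⁻ y, k x y * g y ∂ν) ^ p * w x ∂μ
      ≤ ∫⁻ x, ∫⁻ y, ψ x ^ (p - 1) * w x * (k x y * (g y ^ p * φ y ^ (1 - p))) ∂ν ∂μ := by
        refine lintegral_mono_ae ?_
        filter_upwards [hkφ] with x hx
        have hkx : Measurable (k x) := hk.of_uncurry_left
        rw [lintegral_const_mul _ (by fun_prop), mul_right_comm]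
        gcongr
        refine (rpow_lintegral_mul_le hp hkx.aemeasurable hφ.aemeasurable hg.aemeasurable
          hφ₀ hφ').trans ?_
        gcongr
    _ = ∫⁻ y, (∫⁻ x, k x y * (ψ x ^ (p - 1) * w x) ∂μ) * (g y ^ p * φ y ^ (1 - p)) ∂ν := by
        rw [lintegral_lintegral_swap]
        · refine lintegral_congr fun y => ?_
          have hky : Measurable fun x => k x y := hk.of_uncurry_right
          rw [← lintegral_mul_const _ (by fun_prop)]
          exact lintegral_congr fun x => by ring
        · refine Measurable.aemeasurable ?_
          simp only [Function.uncurry_def] at hk ⊢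
          fun_prop
    _ ≤ ∫⁻ y, g y ^ p * v y ∂ν := by
        refine lintegral_mono_ae ?_
        filter_upwards [hkψ, hφ₀, hφ'] with y hy hy₀ hy'
        have hφ_cancel : φ y ^ (p - 1) * φ y ^ (1 - p) = 1 := by
          rw [← ENNReal.rpow_add _ _ hy₀ hy', sub_add_sub_cancel, sub_self, ENNReal.rpow_zero]
        calc _ ≤ v y * φ y ^ (p - 1) * (g y ^ p * φ y ^ (1 - p)) := by gcongr
          _ = g y ^ p * v y * (φ y ^ (p - 1) * φ y ^ (1 - p)) := by ring
          _ = g y ^ p * v y := by rw [hφ_cancel, mul_one]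

end Schur

section RadialIntegrals

variable {E : Type*} [NormedAddCommGroup E] [NormedSpace ℝ E] [FiniteDimensional ℝ E]
  [MeasurableSpace E] [BorelSpace E] (μ : Measure E) [μ.IsAddHaarMeasure]

theorem lintegral_comp_smul_addHaar (f : E → ℝ≥0∞) {R : ℝ} (hR : R ≠ 0) :
    ∫⁻ x, f (R • x) ∂μ = ENNReal.ofReal |(R ^ finrank ℝ E)⁻¹| * ∫⁻ x, f x ∂μ := by
  calc ∫⁻ x, f (R • x) ∂μ = ∫⁻ x, f x ∂μ.map (R • ·) :=
        ((Homeomorph.smulOfNeZero R hR).measurableEmbedding.lintegral_map f).symm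
    _ = ENNReal.ofReal |(R ^ finrank ℝ E)⁻¹| * ∫⁻ x, f x ∂μ := by
        rw [Measure.map_addHaar_smul μ hR, lintegral_smul_measure, smul_eq_mul]

theorem integrable_norm_rpow_mul_min_one_inv [Nontrivial E] {s : ℝ} (hs₀ : 0 < s) (hs₁ : s < 1) :
    Integrable (fun z : E => ‖z‖ ^ (s - finrank ℝ E) * min 1 ‖z‖⁻¹) μ := by
  have hmeas : Measurable fun z : E => ‖z‖ ^ (s - finrank ℝ E) * min 1 ‖z‖⁻¹ := by fun_prop
  rw [← integrableOn_univ, ← union_compl_self (Metric.ball (0 : E) 1), integrableOn_union]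
  constructor
  · refine integrableOn_ball_of_norm_le_rpow (α := finrank ℝ E - s) (C := 1) finrank_pos
      (by linarith) (.of_forall fun z => ?_) hmeas.aestronglyMeasurable
    rw [Real.norm_of_nonneg (by positivity), neg_sub, one_mul]
    exact mul_le_of_le_one_right (by positivity) (min_le_left _ _)
  · have hdecay : (finrank ℝ E : ℝ) < finrank ℝ E + 1 - s := by linarith
    refine (((integrable_one_add_norm (μ := μ) hdecay).const_mul
      (2 ^ (finrank ℝ E + 1 - s))).integrableOn).mono' hmeas.aestronglyMeasurable ?_
    refine (ae_restrict_iff' Metric.isOpen_ball.measurableSet.compl).2 (.of_forall fun z hz => ?_)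
    have hz₁ : 1 ≤ ‖z‖ := by simpa using hz
    have hz₀ : 0 < ‖z‖ := by linarith
    calc ‖‖z‖ ^ (s - finrank ℝ E) * min 1 ‖z‖⁻¹‖
        ≤ ‖z‖ ^ (s - finrank ℝ E) * ‖z‖⁻¹ := by
          rw [Real.norm_of_nonneg (by positivity)]
          gcongr
          exact min_le_right _ _
      _ = ‖z‖ ^ (-(finrank ℝ E + 1 - s)) := by
          rw [← Real.rpow_neg_one, ← Real.rpow_add hz₀]
          ring_nf
      _ ≤ ((1 + ‖z‖) / 2) ^ (-(finrank ℝ E + 1 - s)) :=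
          Real.rpow_le_rpow_of_nonpos (by positivity) (by linarith) (by linarith)
      _ = 2 ^ (finrank ℝ E + 1 - s) * (1 + ‖z‖) ^ (-(finrank ℝ E + 1 - s)) := by
          rw [Real.div_rpow (by positivity) zero_le_two, Real.rpow_neg zero_le_two, div_inv_eq_mul,
            mul_comm]

theorem exists_lintegral_norm_rpow_mul_min_eq [Nontrivial E] {s : ℝ} (hs₀ : 0 < s) (hs₁ : s < 1) :
    ∃ C : ℝ≥0, ∀ H : ℝ, 0 < H →
      ∫⁻ z : E, ENNReal.ofReal (‖z‖ ^ (s - finrank ℝ E) * min 1 (H / ‖z‖)) ∂μ =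
        C * ENNReal.ofReal (H ^ s) := by
  have hfin := (integrable_norm_rpow_mul_min_one_inv μ hs₀ hs₁).lintegral_lt_top
  refine ⟨(∫⁻ z : E, ENNReal.ofReal (‖z‖ ^ (s - finrank ℝ E) * min 1 ‖z‖⁻¹) ∂μ).toNNReal,
    fun H hH => ?_⟩
  have hscale (z : E) : ENNReal.ofReal (‖z‖ ^ (s - finrank ℝ E) * min 1 (H / ‖z‖)) =
      ENNReal.ofReal (H ^ (s - finrank ℝ E)) *
        ENNReal.ofReal (‖H⁻¹ • z‖ ^ (s - finrank ℝ E) * min 1 ‖H⁻¹ • z‖⁻¹) := by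
    rw [← ENNReal.ofReal_mul (by positivity), ← mul_assoc, norm_smul,
      Real.norm_of_nonneg (by positivity), ← Real.mul_rpow hH.le (by positivity),
      mul_inv_cancel_left₀ hH.ne', mul_inv, inv_inv, div_eq_mul_inv]
  simp_rw [hscale]
  rw [lintegral_const_mul _ (by fun_prop), ENNReal.coe_toNNReal hfin.ne,
    lintegral_comp_smul_addHaar μ
      (fun z => ENNReal.ofReal (‖z‖ ^ (s - finrank ℝ E) * min 1 ‖z‖⁻¹)) (inv_ne_zero hH.ne'),
    ← mul_assoc, ← ENNReal.ofReal_mul (by positivity), mul_comm]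
  congr 2
  rw [inv_pow, inv_inv, abs_of_pos (by positivity), ← Real.rpow_add_natCast hH.ne', sub_add_cancel]

end RadialIntegrals

section IncrementKernel

variable {E : Type*} [NormedAddCommGroup E]

section NormedSpace

variable [NormedSpace ℝ E]

/-- The kernel `|z|⁻ⁿ min(1, |h|/|z|)` on an `n`-dimensional space; it bounds the increment over `h`
of the kernel of a multiplier of order zero. -/
noncomputable def incrementKernel (h z : E) : ℝ≥0∞ :=
  ENNReal.ofReal (‖z‖ ^ (-(finrank ℝ E : ℝ)) * min 1 (‖h‖ / ‖z‖))

/-- The weight `|h|^{-(rp + n)}` of the Gagliardo seminorm, with the junk value `0` at `h = 0`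
(for `r p + n ≠ 0`). -/
noncomputable def gagliardoWeight (r p : ℝ) (h : E) : ℝ≥0∞ :=
  ENNReal.ofReal (‖h‖ ^ (-(r * p + finrank ℝ E)))

theorem ofReal_norm_rpow_mul_gagliardoWeight (r : ℝ) {p : ℝ} {h : E} (hh : h ≠ 0) :
    ENNReal.ofReal (‖h‖ ^ r) ^ (p - 1) * gagliardoWeight r p h =
      ENNReal.ofReal (‖h‖ ^ (-(r + finrank ℝ E))) := by
  have hh₀ : 0 < ‖h‖ := norm_pos_iff.2 hh
  rw [gagliardoWeight, ENNReal.ofReal_rpow_of_pos (by positivity),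
    ← ENNReal.ofReal_mul (by positivity), ← Real.rpow_mul hh₀.le, ← Real.rpow_add hh₀]
  ring_nf

variable [MeasurableSpace E] [BorelSpace E]

@[fun_prop]
theorem measurable_incrementKernel :
    Measurable fun q : E × E => incrementKernel q.1 q.2 := by
  unfold incrementKernel
  fun_prop

@[fun_prop]
theorem measurable_gagliardoWeight (r p : ℝ) :
    Measurable (gagliardoWeight (E := E) r p) := by
  unfold gagliardoWeight
  fun_prop

end NormedSpace

variable [InnerProductSpace ℝ E] [FiniteDimensional ℝ E] [MeasurableSpace E] [BorelSpace E]

theorem exists_lintegral_incrementKernel_mul_norm_rpow_eq [Nontrivial E] {r : ℝ} (hr₀ : 0 < r)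
    (hr₁ : r < 1) :
    ∃ C : ℝ≥0, ∀ h : E, h ≠ 0 →
      ∫⁻ z, incrementKernel h z * ENNReal.ofReal (‖z‖ ^ r) = C * ENNReal.ofReal (‖h‖ ^ r) := by
  obtain ⟨C, hC⟩ := exists_lintegral_norm_rpow_mul_min_eq (volume : Measure E) hr₀ hr₁
  refine ⟨C, fun h hh => ?_⟩
  rw [← hC ‖h‖ (norm_pos_iff.2 hh)]
  refine lintegral_congr fun z => ?_
  rcases eq_or_ne z 0 with rfl | hz
  · simp [incrementKernel]
  · rw [incrementKernel, ← ENNReal.ofReal_mul (by positivity), mul_right_comm,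
      ← Real.rpow_add (norm_pos_iff.2 hz), neg_add_eq_sub]

theorem exists_lintegral_incrementKernel_mul_norm_rpow_neg_eq [Nontrivial E] {r : ℝ} (hr₀ : 0 < r)
    (hr₁ : r < 1) :
    ∃ C : ℝ≥0, ∀ z : E, z ≠ 0 →
      ∫⁻ h, incrementKernel h z * ENNReal.ofReal (‖h‖ ^ (-(r + finrank ℝ E))) =
        C * ENNReal.ofReal (‖z‖ ^ (-(r + finrank ℝ E))) := by
  obtain ⟨C, hC⟩ := exists_lintegral_norm_rpow_mul_min_eq (volume : Measure E)
    (sub_pos.2 hr₁) (sub_lt_self 1 hr₀)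
  refine ⟨C, fun z hz => ?_⟩
  have hz₀ : 0 < ‖z‖ := norm_pos_iff.2 hz
  -- `min 1 (|h|/|z|) = (|h|/|z|) min 1 (|z|/|h|)` exchanges the roles of `h` and `z`.
  have hswap (h : E) : incrementKernel h z * ENNReal.ofReal (‖h‖ ^ (-(r + finrank ℝ E))) =
      ENNReal.ofReal (‖z‖ ^ (-finrank ℝ E - 1 : ℝ)) *
        ENNReal.ofReal (‖h‖ ^ (1 - r - finrank ℝ E) * min 1 (‖z‖ / ‖h‖)) := by
    rcases eq_or_ne h 0 with rfl | hh
    · simp [incrementKernel]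
    have hh₀ : 0 < ‖h‖ := norm_pos_iff.2 hh
    have hmin : min 1 (‖h‖ / ‖z‖) = ‖h‖ * ‖z‖⁻¹ * min 1 (‖z‖ / ‖h‖) := by
      rw [mul_min_of_nonneg _ _ (by positivity), min_comm]
      congr 1 <;> field_simp
    rw [incrementKernel, ← ENNReal.ofReal_mul (by positivity), ← ENNReal.ofReal_mul (by positivity),
      hmin, Real.rpow_sub_one hz₀.ne',
      show (1 - r - finrank ℝ E : ℝ) = 1 + -(r + finrank ℝ E) by ring, Real.rpow_add hh₀,
      Real.rpow_one]
    ring_nf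
  simp_rw [hswap]
  rw [lintegral_const_mul _ (by fun_prop), hC ‖z‖ hz₀, mul_left_comm,
    ← ENNReal.ofReal_mul (by positivity), ← Real.rpow_add hz₀]
  ring_nf

theorem exists_lintegral_rpow_lintegral_incrementKernel_mul_le [Nontrivial E] {r p : ℝ}
    (hr₀ : 0 < r) (hr₁ : r < 1) (hp : 1 ≤ p) :
    ∃ C : ℝ≥0, ∀ g : E → ℝ≥0∞, Measurable g →
      ∫⁻ h, (∫⁻ z, incrementKernel h z * g z) ^ p * gagliardoWeight r p h ≤
        C * ∫⁻ z, g z ^ p * gagliardoWeight r p z := by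
  obtain ⟨C₁, hC₁⟩ := exists_lintegral_incrementKernel_mul_norm_rpow_eq (E := E) hr₀ hr₁
  obtain ⟨C₂, hC₂⟩ := exists_lintegral_incrementKernel_mul_norm_rpow_neg_eq (E := E) hr₀ hr₁
  have hne : ∀ᵐ z : E, z ≠ 0 := by simp [ae_iff]
  refine ⟨C₁ ^ (p - 1) * C₂, fun g hg => ?_⟩
  rw [← lintegral_const_mul _ (by fun_prop)]
  simp_rw [mul_left_comm _ (g _ ^ p)]
  refine lintegral_rpow_lintegral_mul_le_of_schur (φ := fun z => ENNReal.ofReal (‖z‖ ^ r))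
    (ψ := fun h => C₁ * ENNReal.ofReal (‖h‖ ^ r)) hp measurable_incrementKernel (by fun_prop)
    ?_ (.of_forall fun _ => ENNReal.ofReal_ne_top) (by fun_prop) (by fun_prop) ?_ ?_ hg
  · filter_upwards [hne] with z hz
    have : 0 < ‖z‖ := norm_pos_iff.2 hz
    exact (ENNReal.ofReal_pos.2 (by positivity)).ne'
  · filter_upwards [hne] with h hh using (hC₁ h hh).le
  · filter_upwards [hne] with z hz
    calc ∫⁻ h, incrementKernel h z *
          ((C₁ * ENNReal.ofReal (‖h‖ ^ r)) ^ (p - 1) * gagliardoWeight r p h)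
        = C₁ ^ (p - 1) *
            ∫⁻ h, incrementKernel h z * ENNReal.ofReal (‖h‖ ^ (-(r + finrank ℝ E))) := by
          rw [← lintegral_const_mul _ (by fun_prop)]
          refine lintegral_congr_ae ?_
          filter_upwards [hne] with h hh
          rw [← ofReal_norm_rpow_mul_gagliardoWeight (p := p) r hh,
            ENNReal.mul_rpow_of_nonneg _ _ (by linarith)]
          ring
      _ ≤ _ := by
          rw [hC₂ z hz, ← ofReal_norm_rpow_mul_gagliardoWeight (p := p) r hz,
            ENNReal.coe_mul, ENNReal.coe_rpow_of_nonneg _ (by linarith)]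
          exact le_of_eq (by ring)

end IncrementKernel

section GagliardoEnergy

theorem lintegral_lintegral_comp_sub {G : Type*} [AddCommGroup G] [MeasurableSpace G]
    [MeasurableAdd₂ G] [MeasurableNeg G] (μ ν : Measure G) [SFinite μ] [SFinite ν]
    [μ.IsAddRightInvariant] {Φ : G → G → ℝ≥0∞} (hΦ : Measurable (Function.uncurry Φ)) :
    ∫⁻ x, ∫⁻ h, Φ (x - h) h ∂ν ∂μ = ∫⁻ x, ∫⁻ h, Φ x h ∂ν ∂μ := by
  have hΦ' : Measurable fun q : G × G => Φ (q.1 - q.2) q.2 :=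
    hΦ.comp (f := fun q : G × G => (q.1 - q.2, q.2)) (by fun_prop)
  rw [lintegral_lintegral_swap hΦ'.aemeasurable, lintegral_lintegral_swap hΦ.aemeasurable]
  exact lintegral_congr fun h => lintegral_sub_right_eq_self (Φ · h) h

variable {E F : Type*} [NormedAddCommGroup E] [InnerProductSpace ℝ E] [FiniteDimensional ℝ E]
  [MeasurableSpace E] [BorelSpace E] [NormedAddCommGroup F]

/-- The `p`-th power of the Gagliardo seminorm `[f]_{r,p}`, written in terms of the increments
`f(x) - f(x - h)`. -/
noncomputable def gagliardoEnergy (r p : ℝ) (f : E → F) : ℝ≥0∞ :=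
  ∫⁻ x, ∫⁻ h, ‖f x - f (x - h)‖ₑ ^ p * gagliardoWeight r p h

/-- The average of the increments of `f` at `x` against `incrementKernel h`. -/
noncomputable def incrementAverage (f : E → F) (x h : E) : ℝ≥0∞ :=
  ∫⁻ z, incrementKernel h z * ‖f x - f (x - z)‖ₑ

@[fun_prop]
theorem measurable_incrementAverage {f : E → F} (hf : Continuous f) :
    Measurable fun q : E × E => incrementAverage f q.1 q.2 := by
  have hdiff : Measurable fun q : (E × E) × E => ‖f q.1.1 - f (q.1.1 - q.2)‖ₑ :=
    Continuous.measurable (by fun_prop)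
  have hker : Measurable fun q : (E × E) × E => incrementKernel q.1.2 q.2 :=
    measurable_incrementKernel.comp (f := fun q : (E × E) × E => (q.1.2, q.2)) (by fun_prop)
  exact (hker.mul hdiff).lintegral_prod_right'

theorem exists_lintegral_incrementAverage_rpow_le [Nontrivial E] {r p : ℝ} (hr₀ : 0 < r)
    (hr₁ : r < 1) (hp : 1 ≤ p) :
    ∃ C : ℝ≥0, ∀ f : E → F, Continuous f →
      ∫⁻ x, ∫⁻ h, incrementAverage f x h ^ p * gagliardoWeight r p h ≤
        C * gagliardoEnergy r p f := by
  obtain ⟨C, hC⟩ := exists_lintegral_rpow_lintegral_incrementKernel_mul_le (E := E) hr₀ hr₁ hp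
  refine ⟨C, fun f hf => ?_⟩
  rw [gagliardoEnergy, ← lintegral_const_mul' _ _ ENNReal.coe_ne_top]
  exact lintegral_mono fun x => hC _ (Continuous.measurable (by fun_prop))

theorem exists_gagliardoEnergy_le_of_enorm_sub_le [Nontrivial E] {G : Type*}
    [NormedAddCommGroup G] {r p : ℝ} (hr₀ : 0 < r) (hr₁ : r < 1) (hp : 1 ≤ p) (A : ℝ≥0) :
    ∃ C : ℝ≥0, ∀ (f : E → F) (u : E → G), Continuous f →
      (∀ x h, ‖u x - u (x - h)‖ₑ ≤ A * (incrementAverage f x h + incrementAverage f (x - h) h)) →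
      gagliardoEnergy r p u ≤ C * gagliardoEnergy r p f := by
  obtain ⟨C, hC⟩ := exists_lintegral_incrementAverage_rpow_le (E := E) (F := F) hr₀ hr₁ hp
  refine ⟨A ^ p * 2 ^ (p - 1) * (2 * C), fun f u hf hu => ?_⟩
  set Φ : E → E → ℝ≥0∞ := fun x h => incrementAverage f x h ^ p * gagliardoWeight r p h with hΦ
  have hΦm : Measurable (Function.uncurry Φ) := by
    have := measurable_incrementAverage hf
    simp only [hΦ, Function.uncurry_def]
    fun_prop
  calc gagliardoEnergy r p u
      ≤ ∫⁻ x, ∫⁻ h, ↑(A ^ p * 2 ^ (p - 1)) * (Φ x h + Φ (x - h) h) := by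
        refine lintegral_mono fun x => lintegral_mono fun h => ?_
        calc _ ≤ (A * (incrementAverage f x h + incrementAverage f (x - h) h)) ^ p *
              gagliardoWeight r p h := by gcongr; exact hu x h
          _ ≤ A ^ p * (2 ^ (p - 1) * (incrementAverage f x h ^ p +
                incrementAverage f (x - h) h ^ p)) * gagliardoWeight r p h := by
              rw [ENNReal.mul_rpow_of_nonneg _ _ (by linarith)]
              gcongr
              exact ENNReal.rpow_add_le_mul_rpow_add_rpow _ _ hp
          _ = _ := by
              rw [ENNReal.coe_mul, ENNReal.coe_rpow_of_nonneg _ (by linarith),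
                ENNReal.coe_rpow_of_nonneg _ (by linarith), ENNReal.coe_ofNat]
              ring
    _ = ↑(A ^ p * 2 ^ (p - 1)) * ((∫⁻ x, ∫⁻ h, Φ x h) + ∫⁻ x, ∫⁻ h, Φ (x - h) h) := by
        rw [← lintegral_add_left (f := fun x => ∫⁻ h, Φ x h) hΦm.lintegral_prod_right',
          ← lintegral_const_mul' _ _ ENNReal.coe_ne_top]
        refine lintegral_congr fun x => ?_
        rw [lintegral_const_mul' _ _ ENNReal.coe_ne_top, lintegral_add_left hΦm.of_uncurry_left]
    _ ≤ ↑(A ^ p * 2 ^ (p - 1)) * (2 * (C * gagliardoEnergy r p f)) := by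
        rw [lintegral_lintegral_comp_sub volume volume hΦm, ← two_mul]
        gcongr
        exact hC f hf
    _ = _ := by
        push_cast
        ring

end GagliardoEnergy

section ScaleKernel

theorem lintegral_Ioi_inv_add_pow_le (k : ℕ) {Z : ℝ} (hZ : 0 < Z) :
    ∫⁻ t in Ioi (0 : ℝ), ENNReal.ofReal ((t + Z) ^ (k + 2))⁻¹ ≤
      ENNReal.ofReal (Z ^ (k + 1))⁻¹ := by
  have : (0 : ℝ) ≤ k := k.cast_nonneg
  have hexp : (-(k + 2 : ℝ)) < -1 := by linarith
  have hpow {n : ℕ} {y : ℝ} (hy : 0 < y) : (y ^ n)⁻¹ = y ^ (-n : ℝ) := by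
    rw [Real.rpow_neg hy.le, Real.rpow_natCast]
  calc ∫⁻ t in Ioi (0 : ℝ), ENNReal.ofReal ((t + Z) ^ (k + 2))⁻¹
      = ∫⁻ y in Ioi Z, ENNReal.ofReal (y ^ (-(k + 2 : ℝ))) := by
        rw [← (measurePreserving_add_right volume Z).setLIntegral_comp_preimage_emb
          (measurableEmbedding_addRight Z) _ (Ioi Z), preimage_add_const_Ioi, sub_self]
        refine setLIntegral_congr_fun measurableSet_Ioi fun t ht => ?_
        simp only [hpow (add_pos (mem_Ioi.1 ht) hZ), Nat.cast_add, Nat.cast_ofNat]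
    _ = ENNReal.ofReal (∫ y in Ioi Z, y ^ (-(k + 2 : ℝ))) :=
        (ofReal_integral_eq_lintegral_ofReal (integrableOn_Ioi_rpow_of_lt hexp hZ)
          (ae_restrict_of_forall_mem measurableSet_Ioi
            fun y hy => Real.rpow_nonneg (hZ.trans hy).le _)).symm
    _ ≤ ENNReal.ofReal (Z ^ (k + 1))⁻¹ := by
        refine ENNReal.ofReal_le_ofReal ?_
        rw [integral_Ioi_rpow_of_lt hexp hZ, hpow hZ, ← neg_div_neg_eq, neg_neg,
          show -(k + 2 : ℝ) + 1 = -(k + 1 : ℕ) by push_cast; ring]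
        exact div_le_self (by positivity) (by push_cast; linarith)

variable {E : Type*} [NormedAddCommGroup E] [NormedSpace ℝ E]

/-- The kernel `min(1, |h|/t) t² / (t + |z|)^{n+2}` on an `n`-dimensional space; it bounds the
increment over `h` of the `L¹`-normalised dilation to scale `t` of a Schwartz function. -/
noncomputable def scaleKernel (t : ℝ) (h z : E) : ℝ≥0∞ :=
  ENNReal.ofReal (min 1 (‖h‖ / t) * (t ^ 2 / (t + ‖z‖) ^ (finrank ℝ E + 2)))

theorem measurable_scaleKernel [MeasurableSpace E] [OpensMeasurableSpace E] (h : E) :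
    Measurable fun q : ℝ × E => scaleKernel q.1 h q.2 := by
  unfold scaleKernel
  fun_prop

theorem ofReal_inv_mul_scaleKernel {t : ℝ} (ht : 0 < t) (h z : E) :
    ENNReal.ofReal t⁻¹ * scaleKernel t h z =
      ENNReal.ofReal (min 1 (‖h‖ / t) * (t / (t + ‖z‖) ^ (finrank ℝ E + 2))) := by
  rw [scaleKernel, ← ENNReal.ofReal_mul (by positivity)]
  congr 1
  field_simp

theorem lintegral_Ioi_inv_mul_scaleKernel_le [FiniteDimensional ℝ E] [Nontrivial E] (h : E)
    {z : E} (hz : z ≠ 0) :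
    ∫⁻ t in Ioi (0 : ℝ), ENNReal.ofReal t⁻¹ * scaleKernel t h z ≤ incrementKernel h z := by
  have hz₀ : 0 < ‖z‖ := norm_pos_iff.2 hz
  obtain ⟨k, hk⟩ : ∃ k, finrank ℝ E = k + 1 := Nat.exists_eq_succ_of_ne_zero finrank_pos.ne'
  rw [incrementKernel, Real.rpow_neg hz₀.le, Real.rpow_natCast,
    mul_min_of_nonneg _ _ (by positivity), ENNReal.ofReal_min, hk]
  refine le_min ?_ ?_
  · rw [mul_one]
    refine (setLIntegral_mono' measurableSet_Ioi fun t (ht : 0 < t) => ?_).trans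
      (lintegral_Ioi_inv_add_pow_le k hz₀)
    rw [ofReal_inv_mul_scaleKernel ht, hk]
    refine ENNReal.ofReal_le_ofReal ?_
    calc min 1 (‖h‖ / t) * (t / (t + ‖z‖) ^ (k + 1 + 2))
        ≤ 1 * ((t + ‖z‖) / (t + ‖z‖) ^ (k + 1 + 2)) := by
          gcongr
          exacts [min_le_left _ _, by linarith]
      _ = ((t + ‖z‖) ^ (k + 2))⁻¹ := by
          field_simp
          ring
  · have hint : ∫⁻ t in Ioi (0 : ℝ), ENNReal.ofReal t⁻¹ * scaleKernel t h z ≤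
        ENNReal.ofReal ‖h‖ * ENNReal.ofReal (‖z‖ ^ (k + 1 + 1))⁻¹ := by
      grw [← lintegral_Ioi_inv_add_pow_le (k + 1) hz₀]
      rw [← lintegral_const_mul' _ _ ENNReal.ofReal_ne_top]
      refine setLIntegral_mono' measurableSet_Ioi fun t (ht : 0 < t) => ?_
      rw [ofReal_inv_mul_scaleKernel ht, hk, ← ENNReal.ofReal_mul (norm_nonneg h)]
      refine ENNReal.ofReal_le_ofReal ?_
      calc min 1 (‖h‖ / t) * (t / (t + ‖z‖) ^ (k + 1 + 2))
          ≤ ‖h‖ / t * (t / (t + ‖z‖) ^ (k + 1 + 2)) := by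
            gcongr
            exact min_le_right _ _
        _ = ‖h‖ * ((t + ‖z‖) ^ (k + 1 + 2))⁻¹ := by field_simp
    refine hint.trans_eq ?_
    rw [← ENNReal.ofReal_mul (norm_nonneg h)]
    congr 1
    field_simp
    ring

end ScaleKernel

section SchwartzDecay

variable {E F : Type*} [NormedAddCommGroup E] [NormedSpace ℝ E] [NormedAddCommGroup F]
  [NormedSpace ℝ F]

theorem exists_norm_iteratedFDeriv_le_div_one_add_norm_pow (K : 𝓢(E, F)) (j N : ℕ) :
    ∃ A : ℝ≥0, ∀ u, ‖iteratedFDeriv ℝ j K u‖ ≤ A / (1 + ‖u‖) ^ N := by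
  refine ⟨Real.toNNReal (2 ^ N *
    ((Finset.Iic (N, j)).sup fun m => SchwartzMap.seminorm ℝ m.1 m.2) K), fun u => ?_⟩
  rw [Real.coe_toNNReal _ (by positivity), le_div_iff₀' (by positivity)]
  exact one_add_le_sup_seminorm_apply (𝕜 := ℝ) (m := (N, j)) le_rfl le_rfl K u

theorem exists_norm_sub_le_mul_norm_div_one_add_norm_pow (K : 𝓢(E, F)) (N : ℕ) :
    ∃ A : ℝ≥0, ∀ u v, ‖v‖ ≤ 1 → ‖K u - K (u - v)‖ ≤ A * ‖v‖ / (1 + ‖u‖) ^ N := by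
  obtain ⟨A, hA⟩ := exists_norm_iteratedFDeriv_le_div_one_add_norm_pow K 1 N
  refine ⟨2 ^ N * A, fun u v hv => ?_⟩
  have hfderiv : ∀ w ∈ Metric.closedBall u 1,
      ‖fderiv ℝ K w‖ ≤ 2 ^ N * A / (1 + ‖u‖) ^ N := fun w hw => by
    have hnorm : 1 + ‖u‖ ≤ 2 * (1 + ‖w‖) := by
      have : ‖u - w‖ ≤ 1 := by rwa [← mem_closedBall_iff_norm']
      linarith [norm_le_insert w u, norm_nonneg w, norm_sub_rev u w]
    calc ‖fderiv ℝ K w‖ ≤ A / (1 + ‖w‖) ^ N := by simpa using hA w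
      _ = 2 ^ N * A / (2 * (1 + ‖w‖)) ^ N := by rw [mul_pow]; field_simp
      _ ≤ 2 ^ N * A / (1 + ‖u‖) ^ N := by gcongr
  have hmean := (convex_closedBall u 1).norm_image_sub_le_of_norm_fderiv_le (𝕜 := ℝ)
    (fun w _ => K.differentiableAt) hfderiv (x := u - v) (y := u)
    (by simpa [mem_closedBall_iff_norm] using hv) (Metric.mem_closedBall_self zero_le_one)
  rw [sub_sub_self] at hmean
  exact hmean.trans_eq (by push_cast; ring)

end SchwartzDecay

section L1Dilation

variable {E F : Type*} [NormedAddCommGroup E] [NormedSpace ℝ E] [NormedAddCommGroup F]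
  [NormedSpace ℝ F]

/-- The `L¹`-normalised dilation `t⁻ⁿ K(z / t)` of a function on an `n`-dimensional space. -/
noncomputable def l1Dilation (t : ℝ) (K : E → F) (z : E) : F :=
  (t ^ finrank ℝ E)⁻¹ • K (t⁻¹ • z)

theorem integral_l1Dilation [FiniteDimensional ℝ E] [MeasurableSpace E] [BorelSpace E]
    (μ : Measure E) [μ.IsAddHaarMeasure] {t : ℝ} (ht : 0 < t) (K : E → F) :
    ∫ z, l1Dilation t K z ∂μ = ∫ z, K z ∂μ := by
  simp only [l1Dilation]
  rw [integral_smul, Measure.integral_comp_smul, inv_pow, inv_inv, abs_of_pos (by positivity),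
    inv_smul_smul₀ (by positivity)]

theorem integrable_l1Dilation [FiniteDimensional ℝ E] [MeasurableSpace E] [BorelSpace E]
    {μ : Measure E} [μ.IsAddHaarMeasure] {t : ℝ} (ht : 0 < t) {K : E → F}
    (hK : Integrable K μ) : Integrable (l1Dilation t K) μ :=
  (hK.comp_smul (inv_ne_zero ht.ne')).smul _

theorem inv_pow_mul_div_one_add_norm_pow {t : ℝ} (ht : 0 < t) (B : ℝ) (n : ℕ) (z : E) :
    (t ^ n)⁻¹ * (B / (1 + ‖t⁻¹ • z‖) ^ (n + 2)) = B * (t ^ 2 / (t + ‖z‖) ^ (n + 2)) := by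
  have htz : t + ‖z‖ = t * (1 + ‖t⁻¹ • z‖) := by
    rw [norm_smul, Real.norm_of_nonneg (by positivity), mul_add, mul_one,
      mul_inv_cancel_left₀ ht.ne']
  rw [htz, mul_pow, pow_add t]
  field_simp

theorem exists_enorm_l1Dilation_le_scaleKernel (K : 𝓢(E, F)) :
    ∃ A : ℝ≥0, ∀ t : ℝ, 0 < t → ∀ h z : E, t ≤ ‖h‖ →
      ‖l1Dilation t K z‖ₑ ≤ A * scaleKernel t h z := by
  obtain ⟨A, hA⟩ := exists_norm_iteratedFDeriv_le_div_one_add_norm_pow K 0 (finrank ℝ E + 2)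
  refine ⟨A, fun t ht h z hth => ?_⟩
  rw [scaleKernel, ← ofReal_coe_nnreal, ← ENNReal.ofReal_mul A.coe_nonneg,
    min_eq_left ((one_le_div ht).2 hth), one_mul, ← ofReal_norm]
  refine ENNReal.ofReal_le_ofReal ?_
  rw [← inv_pow_mul_div_one_add_norm_pow ht, l1Dilation, norm_smul,
    Real.norm_of_nonneg (by positivity)]
  gcongr
  simpa using hA (t⁻¹ • z)

theorem exists_enorm_l1Dilation_sub_le_scaleKernel (K : 𝓢(E, F)) :
    ∃ A : ℝ≥0, ∀ t : ℝ, 0 < t → ∀ h z : E, ‖h‖ ≤ t →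
      ‖l1Dilation t K z - l1Dilation t K (z - h)‖ₑ ≤ A * scaleKernel t h z := by
  obtain ⟨A, hA⟩ := exists_norm_sub_le_mul_norm_div_one_add_norm_pow K (finrank ℝ E + 2)
  refine ⟨A, fun t ht h z hth => ?_⟩
  have hnorm : ‖t⁻¹ • h‖ = ‖h‖ / t := by
    rw [norm_smul, Real.norm_of_nonneg (by positivity), inv_mul_eq_div]
  have hle : ‖h‖ / t ≤ 1 := (div_le_one ht).2 hth
  rw [scaleKernel, ← ofReal_coe_nnreal, ← ENNReal.ofReal_mul A.coe_nonneg, min_eq_right hle,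
    ← ofReal_norm]
  refine ENNReal.ofReal_le_ofReal ?_
  rw [← mul_assoc, ← inv_pow_mul_div_one_add_norm_pow ht, l1Dilation, l1Dilation, ← smul_sub,
    norm_smul, Real.norm_of_nonneg (by positivity), smul_sub, ← hnorm]
  gcongr
  exact hA _ _ (hnorm.trans_le hle)

end L1Dilation

section ConvolutionIncrements

variable {E F : Type*} [NormedAddCommGroup E] [InnerProductSpace ℝ E] [FiniteDimensional ℝ E]
  [MeasurableSpace E] [BorelSpace E] [NormedAddCommGroup F] [NormedSpace ℂ F]

theorem integrable_smul_const_sub_comp_sub {k : E → ℂ} (hk : Integrable k) (f : E →ᵇ F) (x : E)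
    (c : F) : Integrable fun z => k z • (c - f (x - z)) := by
  refine hk.smul_bdd (‖c‖ + ‖f‖) (Continuous.aestronglyMeasurable (by fun_prop))
    (.of_forall fun z => (norm_sub_le _ _).trans ?_)
  gcongr
  exact f.norm_coe_le_norm _

theorem convolution_lsmul_eq_neg_integral_smul_sub [CompleteSpace F] {k : E → ℂ}
    (hk : Integrable k) (hk₀ : ∫ z, k z = 0) (f : E →ᵇ F) (x : E) (c : F) :
    (k ⋆[lsmul ℂ ℂ] f) x = -∫ z, k z • (c - f (x - z)) := by
  have hsplit : ∀ z, k z • f (x - z) = k z • c - k z • (c - f (x - z)) := fun z => by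
    rw [← smul_sub, sub_sub_self]
  simp only [convolution_def, ContinuousLinearMap.lsmul_apply, hsplit]
  rw [integral_sub (hk.smul_const c) (integrable_smul_const_sub_comp_sub hk f x c),
    integral_smul_const, hk₀, zero_smul, zero_sub]

variable [CompleteSpace F]

theorem enorm_convolution_lsmul_le {k : E → ℂ} (hk : Integrable k) (hk₀ : ∫ z, k z = 0)
    (f : E →ᵇ F) (x : E) :
    ‖(k ⋆[lsmul ℂ ℂ] f) x‖ₑ ≤ ∫⁻ z, ‖k z‖ₑ * ‖f x - f (x - z)‖ₑ := by
  rw [convolution_lsmul_eq_neg_integral_smul_sub hk hk₀ f x (f x), enorm_neg]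
  simpa only [enorm_smul] using enorm_integral_le_lintegral_enorm fun z => k z • (f x - f (x - z))

theorem enorm_convolution_lsmul_sub_le {k : E → ℂ} (hk : Integrable k) (hk₀ : ∫ z, k z = 0)
    (f : E →ᵇ F) (x h : E) :
    ‖(k ⋆[lsmul ℂ ℂ] f) x - (k ⋆[lsmul ℂ ℂ] f) (x - h)‖ₑ ≤
      ∫⁻ z, ‖k z - k (z - h)‖ₑ * ‖f x - f (x - z)‖ₑ := by
  have hshift : ∫ z, k z • (f x - f (x - h - z)) = ∫ z, k (z - h) • (f x - f (x - z)) := by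
    rw [← integral_sub_right_eq_self _ h]
    simp only [sub_sub, add_sub_cancel]
  rw [convolution_lsmul_eq_neg_integral_smul_sub hk hk₀ f x (f x),
    convolution_lsmul_eq_neg_integral_smul_sub hk hk₀ f (x - h) (f x), hshift, neg_sub_neg,
    enorm_sub_rev, ← integral_sub (integrable_smul_const_sub_comp_sub hk f x (f x))
      (integrable_smul_const_sub_comp_sub (hk.comp_sub_right h) f x (f x))]
  simpa only [← sub_smul, enorm_smul] using
    enorm_integral_le_lintegral_enorm fun z => (k z - k (z - h)) • (f x - f (x - z))

theorem exists_enorm_convolution_l1Dilation_sub_le (K : 𝓢(E, ℂ)) (hK : ∫ z, K z = 0) :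
    ∃ A : ℝ≥0, ∀ (f : E →ᵇ F) (t : ℝ), 0 < t → ∀ x h,
      ‖(l1Dilation t K ⋆[lsmul ℂ ℂ] f) x - (l1Dilation t K ⋆[lsmul ℂ ℂ] f) (x - h)‖ₑ ≤
        A * ∫⁻ z, scaleKernel t h z * (‖f x - f (x - z)‖ₑ + ‖f (x - h) - f (x - h - z)‖ₑ) := by
  obtain ⟨A₁, hA₁⟩ := exists_enorm_l1Dilation_le_scaleKernel K
  obtain ⟨A₂, hA₂⟩ := exists_enorm_l1Dilation_sub_le_scaleKernel K
  refine ⟨max A₁ A₂, fun f t ht x h => ?_⟩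
  have hint : Integrable (l1Dilation t K) := integrable_l1Dilation ht K.integrable
  have hmean : ∫ z, l1Dilation t K z = 0 := (integral_l1Dilation volume ht K).trans hK
  rw [← lintegral_const_mul' _ _ ENNReal.coe_ne_top]
  rcases le_total t ‖h‖ with hth | hth
  · have hmeas : AEMeasurable fun z => ‖l1Dilation t K z‖ₑ * ‖f x - f (x - z)‖ₑ :=
      hint.aestronglyMeasurable.enorm.mul (Continuous.aemeasurable (by fun_prop))
    grw [enorm_sub_le, enorm_convolution_lsmul_le hint hmean, enorm_convolution_lsmul_le hint hmean,
      ← lintegral_add_left' hmeas]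
    refine lintegral_mono fun z => ?_
    dsimp only
    grw [← mul_add, hA₁ t ht h z hth, le_max_left A₁ A₂, mul_assoc]
  · grw [enorm_convolution_lsmul_sub_le hint hmean]
    refine lintegral_mono fun z => ?_
    dsimp only
    grw [hA₂ t ht h z hth, le_max_right A₁ A₂, mul_assoc, ← le_self_add]

theorem exists_lintegral_enorm_convolution_l1Dilation_sub_le [Nontrivial E] (K : 𝓢(E, ℂ))
    (hK : ∫ z, K z = 0) :
    ∃ A : ℝ≥0, ∀ (f : E →ᵇ F) (x h : E),
      ∫⁻ t in Ioi (0 : ℝ), ENNReal.ofReal t⁻¹ *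
        ‖(l1Dilation t K ⋆[lsmul ℂ ℂ] f) x - (l1Dilation t K ⋆[lsmul ℂ ℂ] f) (x - h)‖ₑ ≤
          A * (incrementAverage f x h + incrementAverage f (x - h) h) := by
  obtain ⟨A, hA⟩ := exists_enorm_convolution_l1Dilation_sub_le (F := F) K hK
  refine ⟨A, fun f x h => ?_⟩
  set D : E → ℝ≥0∞ := fun z => ‖f x - f (x - z)‖ₑ + ‖f (x - h) - f (x - h - z)‖ₑ
  have hdiff (y : E) : Measurable fun z => ‖f y - f (y - z)‖ₑ :=
    Continuous.measurable (by fun_prop)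
  have hD : Measurable D := (hdiff x).add (hdiff (x - h))
  have hscale := measurable_scaleKernel h
  have hne : ∀ᵐ z : E, z ≠ 0 := by simp [ae_iff]
  calc ∫⁻ t in Ioi (0 : ℝ), ENNReal.ofReal t⁻¹ *
        ‖(l1Dilation t K ⋆[lsmul ℂ ℂ] f) x - (l1Dilation t K ⋆[lsmul ℂ ℂ] f) (x - h)‖ₑ
      ≤ ∫⁻ t in Ioi (0 : ℝ), A * ∫⁻ z, ENNReal.ofReal t⁻¹ * scaleKernel t h z * D z := by
        refine setLIntegral_mono' measurableSet_Ioi fun t (ht : 0 < t) => ?_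
        grw [hA f t ht x h, mul_left_comm]
        simp_rw [mul_assoc]
        rw [lintegral_const_mul' _ _ ENNReal.ofReal_ne_top]
    _ = A * ∫⁻ z, (∫⁻ t in Ioi (0 : ℝ), ENNReal.ofReal t⁻¹ * scaleKernel t h z) * D z := by
        rw [lintegral_const_mul' _ _ ENNReal.coe_ne_top,
          lintegral_lintegral_swap (Measurable.aemeasurable (by fun_prop))]
        congr 1
        refine lintegral_congr fun z => lintegral_mul_const _ ?_
        fun_prop
    _ ≤ A * ∫⁻ z, incrementKernel h z * D z := by
        gcongr 1
        refine lintegral_mono_ae ?_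
        filter_upwards [hne] with z hz
        gcongr
        exact lintegral_Ioi_inv_mul_scaleKernel_le h hz
    _ = A * (incrementAverage f x h + incrementAverage f (x - h) h) := by
        rw [incrementAverage, incrementAverage, ← lintegral_add_left (by fun_prop)]
        simp only [D, mul_add]

end ConvolutionIncrements

section Calderon

theorem integral_Ioi_inv_smul_comp_mul {G : Type*} [NormedAddCommGroup G] [NormedSpace ℝ G]
    (g : ℝ → G) {s : ℝ} (hs : 0 < s) :
    ∫ t in Ioi (0 : ℝ), t⁻¹ • g (t * s) = ∫ t in Ioi (0 : ℝ), t⁻¹ • g t := by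
  have hscale := integral_comp_mul_right_Ioi (fun u => u⁻¹ • g u) 0 hs
  simp only [mul_inv_rev, mul_smul, zero_mul] at hscale
  rw [integral_smul] at hscale
  exact smul_right_injective G (inv_ne_zero hs.ne') hscale

theorem exists_contDiff_integral_Ioi_inv_mul_eq_one :
    ∃ χ : ℝ → ℝ, ContDiff ℝ (⊤ : ℕ∞) χ ∧ (∀ u, 0 < u → 0 ≤ χ u) ∧
      Function.support χ ⊆ Ioo 1 3 ∧ ∫ u in Ioi (0 : ℝ), u⁻¹ * χ u = 1 := by
  let η : ContDiffBump (2 : ℝ) := ⟨1 / 2, 1, by norm_num, by norm_num⟩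
  have hsupp : Function.support (η.normed volume) = Ioo 1 3 := by
    rw [η.support_normed_eq, Real.ball_eq_Ioo]
    norm_num [η]
  refine ⟨fun u => u * η.normed volume u, contDiff_id.mul η.contDiff_normed,
    fun u hu => mul_nonneg hu.le (η.nonneg_normed u),
    (Function.support_mul_subset_right _ _).trans hsupp.subset, ?_⟩
  calc ∫ u in Ioi (0 : ℝ), u⁻¹ * (u * η.normed volume u)
      = ∫ u in Ioi (0 : ℝ), η.normed volume u :=
        setIntegral_congr_fun measurableSet_Ioi fun u hu => inv_mul_cancel_left₀ (ne_of_gt hu) _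
    _ = ∫ u, η.normed volume u := by
        refine setIntegral_eq_integral_of_forall_compl_eq_zero fun u hu => ?_
        rw [← Function.notMem_support, hsupp]
        exact fun h => hu (zero_lt_one.trans h.1)
    _ = 1 := η.integral_normed

variable {E G : Type*} [NormedAddCommGroup E] [InnerProductSpace ℝ E] [FiniteDimensional ℝ E]
  [NormedAddCommGroup G] {a : E → G}

theorem exists_norm_le_of_continuousOn_of_homogeneous (ha : ContinuousOn a {0}ᶜ)
    (hom : ∀ (c : ℝ) (ξ : E), 0 < c → ξ ≠ 0 → a (c • ξ) = a ξ) :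
    ∃ B : ℝ≥0, ∀ ξ, ξ ≠ 0 → ‖a ξ‖ ≤ B := by
  have hsphere : Metric.sphere (0 : E) 1 ⊆ {0}ᶜ := fun ξ hξ =>
    ne_zero_of_mem_unit_sphere ⟨ξ, hξ⟩
  obtain ⟨B, hB⟩ := (isCompact_sphere (0 : E) 1).exists_bound_of_continuousOn (ha.mono hsphere)
  refine ⟨B.toNNReal, fun ξ hξ => ?_⟩
  rw [← hom ‖ξ‖⁻¹ ξ (inv_pos.2 (norm_pos_iff.2 hξ)) hξ]
  exact (hB _ (by simp [norm_smul, hξ])).trans B.le_coe_toNNReal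

variable [NormedSpace ℝ G]

theorem exists_schwartz_eq_smul_of_contDiffOn (ha : ContDiffOn ℝ (⊤ : ℕ∞) a {0}ᶜ) {χ : ℝ → ℝ}
    (hχ : ContDiff ℝ (⊤ : ℕ∞) χ) {ε R : ℝ} (hε : 0 < ε) (hsupp : Function.support χ ⊆ Ioo ε R) :
    ∃ m : 𝓢(E, G), ∀ ξ, m ξ = χ ‖ξ‖ • a ξ := by
  have hzero {u : ℝ} (hu : u ∉ Ioo ε R) : χ u = 0 :=
    Function.notMem_support.1 fun h => hu (hsupp h)
  have hcompact : HasCompactSupport fun ξ => χ ‖ξ‖ • a ξ := by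
    refine .intro (isCompact_closedBall (0 : E) R) fun ξ hξ => ?_
    rw [mem_closedBall_zero_iff, not_le] at hξ
    rw [hzero fun h => hξ.not_gt h.2, zero_smul]
  have hsmooth : ContDiff ℝ (⊤ : ℕ∞) fun ξ => χ ‖ξ‖ • a ξ := by
    refine contDiff_iff_contDiffAt.2 fun ξ => ?_
    rcases eq_or_ne ξ 0 with rfl | hξ
    · refine (contDiffAt_const (c := 0)).congr_of_eventuallyEq ?_
      filter_upwards [Metric.ball_mem_nhds (0 : E) hε] with ζ hζ
      rw [mem_ball_zero_iff] at hζ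
      rw [hzero fun h => hζ.not_gt h.1, zero_smul]
    · exact (hχ.contDiffAt.comp ξ (contDiffAt_norm ℝ hξ)).smul
        (ha.contDiffAt (isOpen_compl_singleton.mem_nhds hξ))
  exact ⟨hcompact.toSchwartzMap hsmooth, fun ξ => rfl⟩

/-- The Calderón decomposition `a(ξ) = ∫₀^∞ m(tξ) dt/t` away from the origin, absolutely
convergent, of a homogeneous symbol `a` of degree zero; `m` vanishes at the origin. -/
structure IsCalderonProfile (m : E → G) (a : E → G) : Prop where
  apply_zero : m 0 = 0
  integral_eq : ∀ ξ, ξ ≠ 0 → ∫ t in Ioi (0 : ℝ), t⁻¹ • m (t • ξ) = a ξ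
  lintegral_enorm_le : ∃ B : ℝ≥0, ∀ ξ, ξ ≠ 0 → ∫⁻ t in Ioi (0 : ℝ), ‖t⁻¹ • m (t • ξ)‖ₑ ≤ B

theorem exists_isCalderonProfile [CompleteSpace G] (ha : ContDiffOn ℝ (⊤ : ℕ∞) a {0}ᶜ)
    (hom : ∀ (c : ℝ) (ξ : E), 0 < c → ξ ≠ 0 → a (c • ξ) = a ξ) :
    ∃ m : 𝓢(E, G), IsCalderonProfile m a := by
  obtain ⟨χ, hχ, hχ₀, hsupp, hχ₁⟩ := exists_contDiff_integral_Ioi_inv_mul_eq_one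
  obtain ⟨m, hm⟩ := exists_schwartz_eq_smul_of_contDiffOn ha hχ one_pos hsupp
  obtain ⟨B, hB⟩ := exists_norm_le_of_continuousOn_of_homogeneous ha.continuousOn hom
  have hχ_zero : χ 0 = 0 := Function.notMem_support.1 fun h => absurd (hsupp h).1 (by norm_num)
  have hχ_int {s : ℝ} (hs : 0 < s) : ∫ t in Ioi (0 : ℝ), t⁻¹ * χ (t * s) = 1 :=
    (integral_Ioi_inv_smul_comp_mul χ hs).trans hχ₁
  have hdil {ξ : E} (hξ : ξ ≠ 0) {t : ℝ} (ht : t ∈ Ioi 0) :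
      t⁻¹ • m (t • ξ) = (t⁻¹ * χ (t * ‖ξ‖)) • a ξ := by
    rw [hm, hom t ξ ht hξ, norm_smul, Real.norm_of_nonneg (le_of_lt ht), smul_smul]
  refine ⟨m, ⟨by simp [hm, hχ_zero], fun ξ hξ => ?_, B, fun ξ hξ => ?_⟩⟩
  · rw [setIntegral_congr_fun measurableSet_Ioi fun t => hdil hξ, integral_smul_const,
      hχ_int (norm_pos_iff.2 hξ), one_smul]
  · have hnonneg : ∀ t ∈ Ioi (0 : ℝ), 0 ≤ t⁻¹ * χ (t * ‖ξ‖) := fun t (ht : 0 < t) =>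
      mul_nonneg (by positivity) (hχ₀ _ (mul_pos ht (norm_pos_iff.2 hξ)))
    have hcongr : ∀ t ∈ Ioi (0 : ℝ),
        ‖t⁻¹ • m (t • ξ)‖ₑ = ENNReal.ofReal (t⁻¹ * χ (t * ‖ξ‖)) * ‖a ξ‖ₑ := fun t ht => by
      rw [hdil hξ ht, enorm_smul, Real.enorm_of_nonneg (hnonneg t ht)]
    have hχ_integral := hχ_int (norm_pos_iff.2 hξ)
    rw [setLIntegral_congr_fun measurableSet_Ioi hcongr, lintegral_mul_const' _ _ enorm_ne_top,
      ← ofReal_integral_eq_lintegral_ofReal (integrable_of_integral_eq_one hχ_integral)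
        (ae_restrict_of_forall_mem measurableSet_Ioi hnonneg),
      hχ_integral, ofReal_one, one_mul]
    exact enorm_le_coe.2 (hB ξ hξ)

end Calderon

section FourierMultiplier

variable {E F : Type*} [NormedAddCommGroup E] [InnerProductSpace ℝ E] [FiniteDimensional ℝ E]
  [MeasurableSpace E] [BorelSpace E] [NormedAddCommGroup F] [NormedSpace ℂ F]

/-- The operator with Fourier symbol `a`, in the normalisation of the Fourier transform whose
phase is `2π⟪x, ξ⟫`. -/
noncomputable def fourierMultiplier (a : E → ℂ) (f : 𝓢(E, F)) : E → F :=
  𝓕⁻ fun ξ => a ξ • 𝓕 f ξ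

theorem fourierInv_comp_smul (m : E → F) {t : ℝ} (ht : 0 < t) :
    𝓕⁻ (fun ξ => m (t • ξ)) = l1Dilation t (𝓕⁻ m) := by
  ext x
  have hphase (ξ : E) : ⟪ξ, x⟫ = ⟪t • ξ, t⁻¹ • x⟫ := by
    rw [real_inner_smul_left, real_inner_smul_right, mul_inv_cancel_left₀ ht.ne']
  simp only [l1Dilation, Real.fourierInv_eq, hphase]
  rw [Measure.integral_comp_smul volume (fun ξ => 𝐞 ⟪ξ, t⁻¹ • x⟫ • m ξ),
    abs_of_pos (by positivity)]

theorem integral_fourierInv [CompleteSpace F] (m : 𝓢(E, F)) : ∫ z, 𝓕⁻ m z = m 0 := by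
  calc ∫ z, 𝓕⁻ m z = 𝓕 (𝓕⁻ m) 0 := by rw [fourier_coe, Real.fourier_eq]; simp
    _ = m 0 := by rw [fourier_fourierInv_eq]

theorem fourierMultiplier_comp_smul [CompleteSpace F] (m : 𝓢(E, ℂ)) (f : 𝓢(E, F)) {t : ℝ}
    (ht : 0 < t) :
    fourierMultiplier (fun ξ => m (t • ξ)) f = l1Dilation t (𝓕⁻ m : 𝓢(E, ℂ)) ⋆[lsmul ℂ ℂ] f := by
  let M : 𝓢(E, ℂ) := compCLMOfContinuousLinearEquiv ℂ
    (ContinuousLinearEquiv.smulLeft (Units.mk0 t ht.ne')) m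
  have hM : ⇑(𝓕⁻ M : 𝓢(E, ℂ)) = l1Dilation t (𝓕⁻ m : 𝓢(E, ℂ)) := by
    rw [fourierInv_coe, fourierInv_coe]
    exact fourierInv_comp_smul m ht
  ext x
  calc fourierMultiplier (fun ξ => m (t • ξ)) f x
      = 𝓕⁻ (pairing (lsmul ℂ ℂ) M (𝓕 f)) x := by
        rw [fourierInv_coe]
        rfl
    _ = SchwartzMap.convolution (lsmul ℂ ℂ) (𝓕⁻ M) f x := by simp [SchwartzMap.convolution]
    _ = (l1Dilation t (𝓕⁻ m : 𝓢(E, ℂ)) ⋆[lsmul ℂ ℂ] f) x := by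
        rw [SchwartzMap.convolution_apply, hM]

namespace IsCalderonProfile

variable [Nontrivial E] {a m : E → ℂ} {g : E → F}

theorem integrable_prod_smul (hma : IsCalderonProfile m a) (hm : Continuous m)
    (hg : Integrable g) :
    Integrable (fun q : E × ℝ => (q.2⁻¹ • m (q.2 • q.1)) • g q.1)
      (volume.prod (volume.restrict (Ioi 0))) := by
  obtain ⟨B, hB⟩ := hma.lintegral_enorm_le
  have hne : ∀ᵐ ξ : E, ξ ≠ 0 := by simp [ae_iff]
  have hkernel : Measurable fun q : E × ℝ => q.2⁻¹ • m (q.2 • q.1) :=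
    measurable_snd.inv.smul (hm.comp (by fun_prop)).measurable
  have hmeas := hkernel.aestronglyMeasurable.smul
    (hg.aestronglyMeasurable.comp_fst (ν := volume.restrict (Ioi (0 : ℝ))))
  refine ⟨hmeas, ?_⟩
  rw [hasFiniteIntegral_iff_enorm]
  refine (lintegral_prod _ hmeas.enorm).trans_lt ?_
  calc ∫⁻ ξ, ∫⁻ t in Ioi (0 : ℝ), ‖(t⁻¹ • m (t • ξ)) • g ξ‖ₑ
      ≤ ∫⁻ ξ, B * ‖g ξ‖ₑ := by
        refine lintegral_mono_ae ?_
        filter_upwards [hne] with ξ hξ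
        simp only [enorm_smul _ (g ξ)]
        grw [lintegral_mul_const' _ _ enorm_ne_top, hB ξ hξ]
    _ < ∞ := by
        rw [lintegral_const_mul' _ _ coe_ne_top]
        exact mul_lt_top coe_lt_top hg.2

theorem integrable_prod_fourierChar_smul (hma : IsCalderonProfile m a) (hm : Continuous m)
    (hg : Integrable g) (x : E) :
    Integrable (Function.uncurry fun (ξ : E) (t : ℝ) =>
        t⁻¹ • 𝐞 ⟪ξ, x⟫ • m (t • ξ) • g ξ)
      (volume.prod (volume.restrict (Ioi 0))) := by
  have hchar : Integrable fun ξ => 𝐞 ⟪ξ, x⟫ • g ξ := by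
    simpa using (Real.fourierIntegral_convergent_iff (-x)).2 hg
  convert hma.integrable_prod_smul hm hchar using 2 with ⟨ξ, t⟩
  simp only [Function.uncurry_apply_pair]
  rw [smul_assoc, smul_comm (m (t • ξ))]

theorem integrableOn_fourierMultiplier (hma : IsCalderonProfile m a) (hm : Continuous m)
    (f : 𝓢(E, F)) (x : E) :
    IntegrableOn (fun t : ℝ => t⁻¹ • fourierMultiplier (fun ξ => m (t • ξ)) f x) (Ioi 0) := by
  simp only [fourierMultiplier, Real.fourierInv_eq, ← integral_smul]
  exact (hma.integrable_prod_fourierChar_smul hm (𝓕 f).integrable x).integral_prod_right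

theorem fourierMultiplier_eq_integral [CompleteSpace F] (hma : IsCalderonProfile m a)
    (hm : Continuous m) (f : 𝓢(E, F)) (x : E) :
    fourierMultiplier a f x =
      ∫ t in Ioi (0 : ℝ), t⁻¹ • fourierMultiplier (fun ξ => m (t • ξ)) f x := by
  have hne : ∀ᵐ ξ : E, ξ ≠ 0 := by simp [ae_iff]
  simp only [fourierMultiplier, Real.fourierInv_eq, ← integral_smul]
  rw [← integral_integral_swap (hma.integrable_prod_fourierChar_smul hm (𝓕 f).integrable x)]
  refine integral_congr_ae ?_
  filter_upwards [hne] with ξ hξ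
  rw [← hma.integral_eq ξ hξ]
  have hcomm (c : ℂ) : 𝐞 ⟪ξ, x⟫ • c • 𝓕 f ξ = c • 𝐞 ⟪ξ, x⟫ • 𝓕 f ξ := smul_comm _ _ _
  simp_rw [hcomm, ← smul_assoc (_ : ℝ)]
  exact (integral_smul_const _ _).symm

end IsCalderonProfile

theorem exists_enorm_fourierMultiplier_sub_le [Nontrivial E] [CompleteSpace F] {a : E → ℂ}
    (ha : ContDiffOn ℝ (⊤ : ℕ∞) a {0}ᶜ)
    (hom : ∀ (c : ℝ) (ξ : E), 0 < c → ξ ≠ 0 → a (c • ξ) = a ξ) :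
    ∃ A : ℝ≥0, ∀ (f : 𝓢(E, F)) (x h : E),
      ‖fourierMultiplier a f x - fourierMultiplier a f (x - h)‖ₑ ≤
        A * (incrementAverage f x h + incrementAverage f (x - h) h) := by
  obtain ⟨m, hma⟩ := exists_isCalderonProfile ha hom
  obtain ⟨A, hA⟩ := exists_lintegral_enorm_convolution_l1Dilation_sub_le (F := F) (𝓕⁻ m)
    ((integral_fourierInv m).trans hma.apply_zero)
  refine ⟨A, fun f x h => ?_⟩
  have hint := hma.integrableOn_fourierMultiplier m.continuous f
  simp only [hma.fourierMultiplier_eq_integral m.continuous]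
  rw [← integral_sub (hint x) (hint (x - h))]
  refine (enorm_integral_le_lintegral_enorm _).trans (le_of_eq_of_le ?_
    (hA f.toBoundedContinuousFunction x h))
  refine setLIntegral_congr_fun measurableSet_Ioi fun t (ht : 0 < t) => ?_
  rw [← smul_sub, enorm_smul, Real.enorm_of_nonneg (inv_pos.2 ht).le,
    fourierMultiplier_comp_smul m f ht]
  rfl

theorem exists_gagliardoEnergy_fourierMultiplier_le [Nontrivial E] [CompleteSpace F] {a : E → ℂ}
    (ha : ContDiffOn ℝ (⊤ : ℕ∞) a {0}ᶜ)
    (hom : ∀ (c : ℝ) (ξ : E), 0 < c → ξ ≠ 0 → a (c • ξ) = a ξ)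
    {r p : ℝ} (hr₀ : 0 < r) (hr₁ : r < 1) (hp : 1 ≤ p) :
    ∃ C : ℝ≥0, ∀ f : 𝓢(E, F),
      gagliardoEnergy r p (fourierMultiplier a f) ≤ C * gagliardoEnergy r p f := by
  obtain ⟨A, hA⟩ := exists_enorm_fourierMultiplier_sub_le (F := F) ha hom
  obtain ⟨C, hC⟩ :=
    exists_gagliardoEnergy_le_of_enorm_sub_le (E := E) (F := F) (G := F) hr₀ hr₁ hp A
  exact ⟨C, fun f => hC f _ f.continuous (hA f)⟩

end FourierMultiplier

section EuclideanSpace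

variable {d : ℕ}

theorem gagliardo_eq_gagliardoEnergy_rpow {F : Type*} [NormedAddCommGroup F] (r : ℝ)
    {p : ℝ} (hp : 0 < p) (f : Ed d → F) :
    gagliardo d r p f = gagliardoEnergy r p f ^ (1 / p) := by
  rw [gagliardo, gagliardoEnergy]
  congr 1
  refine lintegral_congr fun x => ?_
  rw [← lintegral_sub_left_eq_self _ x]
  refine lintegral_congr fun h => ?_
  change ‖f x - f (x - h)‖ₑ ^ p / ‖x - (x - h)‖ₑ ^ (r * p + d) = _
  rw [sub_sub_self]
  rcases eq_or_ne h 0 with rfl | hh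
  · simp [hp]
  · rw [gagliardoWeight, finrank_euclideanSpace_fin, Real.rpow_neg (norm_nonneg h),
      ENNReal.ofReal_inv_of_pos (by have := norm_pos_iff.2 hh; positivity),
      ← ENNReal.ofReal_rpow_of_pos (norm_pos_iff.2 hh), ofReal_norm, div_eq_mul_inv]

theorem ftransform_eq_fourier (f : 𝓢(Ed d, ℂ)) (κ : Ed d) :
    ftransform d f κ = 𝓕 f ((2 * Real.pi)⁻¹ • κ) := by
  rw [fourier_coe, Real.fourier_eq', ftransform]
  congr 1
  ext x
  rw [smul_eq_mul, inner_smul_right]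
  congr 2
  push_cast
  field_simp

theorem symbOp_eq_fourierMultiplier {a : Ed d → ℂ} (ha : IsSymbol0 d a) (f : 𝓢(Ed d, ℂ)) :
    symbOp d a f = fourierMultiplier a f := by
  ext x
  have hhom (ξ : Ed d) : a ((2 * Real.pi) • ξ) = a ξ := by
    rcases eq_or_ne ξ 0 with rfl | hξ
    · rw [smul_zero]
    · exact ha.2 _ ξ Real.two_pi_pos hξ
  have hscale := Measure.integral_comp_smul (E := Ed d) volume
    (fun κ => Complex.exp (Complex.I * ⟪x, κ⟫) * a κ * ftransform d f κ) (2 * Real.pi)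
  rw [finrank_euclideanSpace_fin, abs_of_pos (by positivity)] at hscale
  rw [symbOp, Real.rpow_neg (by positivity), Real.rpow_natCast, ← Complex.real_smul, ← hscale,
    fourierMultiplier, Real.fourierInv_eq']
  refine integral_congr_ae (.of_forall fun ξ => ?_)
  dsimp only
  rw [hhom, ftransform_eq_fourier, inv_smul_smul₀ Real.two_pi_pos.ne', inner_smul_right,
    real_inner_comm, smul_eq_mul, smul_eq_mul, mul_assoc]
  congr 2
  push_cast
  ring

end EuclideanSpace

theorem stmt4_general (d : ℕ) (hd : 1 ≤ d) (r p : ℝ) (hr0 : 0 < r) (hr1 : r < 1) (hp : 1 ≤ p)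
    (a : Ed d → ℂ) (ha : IsSymbol0 d a) :
    ∃ C : ℝ, 0 < C ∧ ∀ f : SchwartzMap (Ed d) ℂ,
      gagliardo d r p (symbOp d a ⇑f) ≤ ENNReal.ofReal C * gagliardo d r p ⇑f := by
  have : Nonempty (Fin d) := ⟨⟨0, hd⟩⟩
  obtain ⟨C, hC⟩ := exists_gagliardoEnergy_fourierMultiplier_le (F := ℂ) ha.1 ha.2 hr0 hr1 hp
  have hp₀ : 0 < p := one_pos.trans_le hp
  refine ⟨(C + 1) ^ (1 / p), by positivity, fun f => ?_⟩
  rw [gagliardo_eq_gagliardoEnergy_rpow r hp₀, gagliardo_eq_gagliardoEnergy_rpow r hp₀,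
    symbOp_eq_fourierMultiplier ha, ← ENNReal.ofReal_rpow_of_pos (by positivity),
    ← ENNReal.mul_rpow_of_nonneg _ _ (by positivity)]
  gcongr
  grw [hC f]
  gcongr
  rw [← ofReal_coe_nnreal]
  exact ENNReal.ofReal_le_ofReal (le_add_of_nonneg_right zero_le_one)

/-- A zeroth-order homogeneous symbol `a ∈ S⁰_{ph}` defines an operator
`𝔞` bounded on the homogeneous Besov space `Ḃ^r_{p,p}`: for `0 < r < 1`, `2 ≤ p < ∞`,
`[𝔞[f]]_{r,p} ≤ C [f]_{r,p}` for every Schwartz `f`. -/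
theorem stmt4 (d : ℕ) (hd : 1 ≤ d) (r p : ℝ) (hr0 : 0 < r) (hr1 : r < 1) (hp : 2 ≤ p)
    (a : Ed d → ℂ) (ha : IsSymbol0 d a) :
    ∃ C : ℝ, 0 < C ∧ ∀ f : SchwartzMap (Ed d) ℂ,
      gagliardo d r p (symbOp d a ⇑f) ≤ ENNReal.ofReal C * gagliardo d r p ⇑f :=
  stmt4_general d hd r p hr0 hr1 (one_le_two.trans hp) a ha
end

section
/- Let d ≥ 1, 0 < r < 1, and 2 ≤ p < ∞ with r > d/p, and let a be a symbol of class S⁰_ph on ℝ^d. Set γ₁ = (r − d/p)/(r + 1 + d(p−2)/(2p)). There exists a constant C, depending only on d, r, p and a, such that for every Schwartz function f on ℝ^d with [f]_{−1} := ((2π)^{−d} ∫_{ℝ^d} |κ|^{−2} |f̂(κ)|² dκ)^{1/2} < ∞ one has ‖𝔞[f]‖_{L^∞} ≤ C · [f]_{−1}^{γ₁} · [f]_{r,p}^{1−γ₁}. -/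
open MeasureTheory ENNReal
open scoped RealInnerProductSpace

/-!
Cut the frequencies smoothly at the scale `1 / c`. On the low frequencies `‖ξ‖ ≤ 2 / c`,
Cauchy-Schwarz against the weight `‖ξ‖ ^ (-θ)` (here `θ = -1`) bounds the operator by
`c ^ (-(d / 2 - θ)) * [f]_θ`. The high frequencies split into dyadic shells. By homogeneity, the
piece of the shell at scale `c` is `∫ k u * f (x + c u)` for one fixed Schwartz kernel `k`, whose
integral is the value at `0` of the localised symbol and hence vanishes. One may therefore subtract
from `f (x + c u)` the value of `f` at a second point and average over that point against a Schwartz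
function of integral `1`; Hölder's inequality and the scaling of the Gagliardo seminorm then give
`c ^ (r - d / p) * [f]_{r,p}`, a geometric series over the shells as `d / p < r`. Choosing the `c`
that balances the two bounds gives the interpolation inequality.
-/

open Filter Topology FourierTransform Metric Module
open scoped NNReal SchwartzMap

theorem enorm_rpow_ne_top {x : ℝ} (hx : x ≠ 0) (s : ℝ) : ‖x‖ₑ ^ s ≠ ⊤ :=
  ENNReal.rpow_ne_top_of_ne_zero (enorm_ne_zero.mpr hx) enorm_ne_top

section ChangeOfVariables

variable {E : Type*} [NormedAddCommGroup E] [NormedSpace ℝ E] [FiniteDimensional ℝ E]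
  [MeasurableSpace E] [BorelSpace E] (μ : Measure E) [μ.IsAddHaarMeasure]

theorem lintegral_comp_add_smul (F : E → ℝ≥0∞) (x : E) {c : ℝ} (hc : c ≠ 0) :
    ∫⁻ u, F (x + c • u) ∂μ = ‖c‖ₑ ^ (-(finrank ℝ E : ℝ)) * ∫⁻ u, F u ∂μ := by
  have hmap : ∫⁻ u, F (x + c • u) ∂μ = ∫⁻ u, F (x + u) ∂(μ.map (c • ·)) :=
    ((Homeomorph.smulOfNeZero c hc).measurableEmbedding.lintegral_map fun u => F (x + u)).symm
  rw [hmap, Measure.map_addHaar_smul μ hc, lintegral_smul_measure, lintegral_add_left_eq_self,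
    smul_eq_mul, ← Real.enorm_eq_ofReal_abs, enorm_inv (pow_ne_zero _ hc), enorm_pow,
    ENNReal.rpow_neg, ENNReal.rpow_natCast]

theorem setLIntegral_ball_eq_lintegral_comp_smul (F : E → ℝ≥0∞) {R : ℝ} (hR : 0 < R) :
    ∫⁻ u in ball 0 R, F u ∂μ =
      ‖R‖ₑ ^ (finrank ℝ E : ℝ) * ∫⁻ u in ball 0 1, F (R • u) ∂μ := by
  have hball (u : E) : R • u ∈ ball (0 : E) R ↔ u ∈ ball (0 : E) 1 := by
    simp [norm_smul, abs_of_pos hR, hR]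
  have hscale := lintegral_comp_add_smul μ ((ball 0 R).indicator F) 0 hR.ne'
  have hind (u : E) : (ball 0 R).indicator F (R • u) = (ball 0 1).indicator (F <| R • ·) u := by
    by_cases hu : u ∈ ball (0 : E) 1 <;> simp only [Set.indicator, hball, hu, if_true, if_false]
  simp only [zero_add, hind, lintegral_indicator measurableSet_ball] at hscale
  rw [hscale, ← mul_assoc, ← ENNReal.rpow_add _ _ (by simpa using hR.ne') (by simp), add_neg_cancel,
    ENNReal.rpow_zero, one_mul]

theorem integrableOn_norm_rpow_ball [Nontrivial E] {s : ℝ} (hs : -(finrank ℝ E : ℝ) < s)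
    (R : ℝ) : IntegrableOn (fun x : E => ‖x‖ ^ s) (ball 0 R) μ := by
  refine (integrableOn_fun_norm_addHaar μ (f := (· ^ s))).mpr ?_
  rcases le_or_gt R 0 with hR | hR
  · simp [Set.Ioo_eq_empty_of_le hR]
  refine ((intervalIntegral.integrableOn_Ioo_rpow_iff (s := finrank ℝ E - 1 + s) hR).mpr
    (by linarith)).congr_fun (fun y hy => ?_) measurableSet_Ioo
  have hdim : ((finrank ℝ E - 1 : ℕ) : ℝ) = finrank ℝ E - 1 := by
    push_cast [Nat.cast_pred finrank_pos]; rfl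
  rw [smul_eq_mul, ← Real.rpow_natCast, hdim, ← Real.rpow_add hy.1]

theorem setLIntegral_ball_enorm_rpow_ne_top [Nontrivial E] {s : ℝ} (hs : -(finrank ℝ E : ℝ) < s)
    (R : ℝ) : ∫⁻ x in ball 0 R, ‖x‖ₑ ^ s ∂μ ≠ ⊤ := by
  have hae : ∀ᵐ x ∂μ.restrict (ball 0 R), ‖‖x‖ ^ s‖ₑ = ‖x‖ₑ ^ s := by
    filter_upwards [ae_restrict_of_ae (Measure.ae_ne μ 0)] with x hx
    have hpos : 0 < ‖x‖ := norm_pos_iff.mpr hx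
    rw [Real.enorm_of_nonneg (by positivity), ← ENNReal.ofReal_rpow_of_pos hpos, ofReal_norm]
  rw [← lintegral_congr_ae hae]
  exact (integrableOn_norm_rpow_ball μ hs R).2.ne

theorem setLIntegral_ball_enorm_rpow (s : ℝ) {R : ℝ} (hR : 0 < R) :
    ∫⁻ x in ball 0 R, ‖x‖ₑ ^ s ∂μ =
      ‖R‖ₑ ^ (finrank ℝ E + s) * ∫⁻ x in ball 0 1, ‖x‖ₑ ^ s ∂μ := by
  have hR0 : ‖R‖ₑ ≠ 0 := by simpa using hR.ne'
  rw [setLIntegral_ball_eq_lintegral_comp_smul μ _ hR, ENNReal.rpow_add _ _ hR0 enorm_ne_top,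
    mul_assoc, ← lintegral_const_mul' _ _ (enorm_rpow_ne_top hR.ne' s)]
  simp only [enorm_smul, ENNReal.mul_rpow_of_ne_top enorm_ne_top enorm_ne_top]

end ChangeOfVariables

section Gagliardo

variable {d : ℕ} {r p : ℝ}

theorem gagliardo_comp_add_smul {F : Type*} [NormedAddCommGroup F] (hp : 0 < p) (f : Ed d → F)
    (x : Ed d) {c : ℝ} (hc : c ≠ 0) :
    gagliardo d r p (fun u => f (x + c • u)) = ‖c‖ₑ ^ (r - d / p) * gagliardo d r p f := by
  have hc0 : ‖c‖ₑ ≠ 0 := by simpa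
  have hctop : ‖c‖ₑ ≠ ⊤ := enorm_ne_top
  let K (y z : Ed d) : ℝ≥0∞ := ‖f y - f z‖ₑ ^ p / ‖y - z‖ₑ ^ (r * p + d)
  have hK (u v : Ed d) : ‖f (x + c • u) - f (x + c • v)‖ₑ ^ p / ‖u - v‖ₑ ^ (r * p + d) =
      ‖c‖ₑ ^ (r * p + d) * K (x + c • u) (x + c • v) := by
    simp only [K]
    rw [add_sub_add_left_eq_sub, ← smul_sub, enorm_smul,
      ENNReal.mul_rpow_of_ne_top hctop enorm_ne_top, ← mul_div_assoc, ENNReal.mul_div_mul_left]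
    · simp [ENNReal.rpow_eq_zero_iff, hc0, hctop]
    · exact enorm_rpow_ne_top hc _
  have hdouble : ∫⁻ u, ∫⁻ v, K (x + c • u) (x + c • v) =
      ‖c‖ₑ ^ (-(d : ℝ)) * (‖c‖ₑ ^ (-(d : ℝ)) * ∫⁻ y, ∫⁻ z, K y z) := by
    simp_rw [lintegral_comp_add_smul volume (K (x + c • _)) x hc]
    rw [lintegral_const_mul' _ _ (by simpa using enorm_rpow_ne_top hc (-(d : ℝ))),
      lintegral_comp_add_smul volume (fun y => ∫⁻ z, K y z) x hc, finrank_euclideanSpace_fin]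
  calc gagliardo d r p (fun u => f (x + c • u))
      = (∫⁻ u, ∫⁻ v, ‖c‖ₑ ^ (r * p + d) * K (x + c • u) (x + c • v)) ^ (1 / p) := by
        simp_rw [← hK]; rfl
    _ = (‖c‖ₑ ^ (r * p - d) * ∫⁻ y, ∫⁻ z, K y z) ^ (1 / p) := by
        simp_rw [lintegral_const_mul' _ _ (enorm_rpow_ne_top hc _)]
        rw [hdouble, ← mul_assoc, ← mul_assoc, ← ENNReal.rpow_add _ _ hc0 hctop,
          ← ENNReal.rpow_add _ _ hc0 hctop]
        ring_nf
    _ = ‖c‖ₑ ^ (r - d / p) * gagliardo d r p f := by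
        rw [ENNReal.mul_rpow_of_nonneg _ _ (by positivity), ← ENNReal.rpow_mul]
        congr 2
        field_simp

theorem lintegral_mul_enorm_sub_le_gagliardo {F : Type*} [NormedAddCommGroup F] {q : ℝ}
    (hpq : p.HolderConjugate q) {g : Ed d → F} (hg : StronglyMeasurable g)
    {W : Ed d × Ed d → ℝ≥0∞} (hW : Measurable W) :
    ∫⁻ x, ∫⁻ y, W (x, y) * ‖g x - g y‖ₑ ≤
      gagliardo d r p g *
        (∫⁻ x, ∫⁻ y, (‖x - y‖ₑ ^ (r + d / p) * W (x, y)) ^ q) ^ (1 / q) := by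
  let Q (w : Ed d × Ed d) : ℝ≥0∞ := ‖g w.1 - g w.2‖ₑ / ‖w.1 - w.2‖ₑ ^ (r + d / p)
  let U (w : Ed d × Ed d) : ℝ≥0∞ := ‖w.1 - w.2‖ₑ ^ (r + d / p) * W w
  have hQ : Measurable Q :=
    ((hg.comp_measurable measurable_fst).sub (hg.comp_measurable measurable_snd)).enorm.div
      (by fun_prop)
  have hU : Measurable U := by fun_prop
  have hfactor (w : Ed d × Ed d) : W w * ‖g w.1 - g w.2‖ₑ = (Q * U) w := by
    rcases eq_or_ne w.1 w.2 with heq | hne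
    · simp [Q, U, heq]
    have hn : ‖w.1 - w.2‖ₑ ≠ 0 := by simpa [sub_eq_zero]
    simp only [Q, U, Pi.mul_apply]
    rw [← mul_assoc, ENNReal.div_mul_cancel, mul_comm]
    · simp [ENNReal.rpow_eq_zero_iff, hn]
    · simp [ENNReal.rpow_eq_top_iff, hn]
  have hgag : gagliardo d r p g = (∫⁻ w, Q w ^ p ∂volume.prod volume) ^ (1 / p) := by
    rw [lintegral_prod _ (hQ.pow_const p).aemeasurable]
    simp only [gagliardo, Q, ENNReal.div_rpow_of_nonneg _ _ hpq.nonneg, ← ENNReal.rpow_mul,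
      add_mul, div_mul_cancel₀ _ hpq.ne_zero]
    rfl
  calc ∫⁻ x, ∫⁻ y, W (x, y) * ‖g x - g y‖ₑ
      = ∫⁻ w, (Q * U) w ∂volume.prod volume := by
        rw [lintegral_prod _ (hQ.mul hU).aemeasurable]
        simp only [← hfactor]
    _ ≤ (∫⁻ w, Q w ^ p ∂volume.prod volume) ^ (1 / p) *
          (∫⁻ w, U w ^ q ∂volume.prod volume) ^ (1 / q) :=
        ENNReal.lintegral_mul_le_Lp_mul_Lq _ hpq hQ.aemeasurable hU.aemeasurable
    _ = _ := by rw [hgag, lintegral_prod _ (hU.pow_const q).aemeasurable]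

end Gagliardo

section Schwartz

theorem norm_sub_rpow_le {V : Type*} [SeminormedAddCommGroup V] {β : ℝ} (hβ : 0 ≤ β) (x y : V) :
    ‖x - y‖ ^ β ≤ (1 + ‖x‖ ^ 2) ^ (β / 2) * (1 + ‖y‖ ^ 2) ^ (β / 2) := by
  have hsq : ‖x - y‖ ^ 2 ≤ (1 + ‖x‖ ^ 2) * (1 + ‖y‖ ^ 2) := by
    have hle := pow_le_pow_left₀ (norm_nonneg _) (norm_sub_le x y) 2
    nlinarith [sq_nonneg (‖x‖ * ‖y‖ - 1)]
  calc ‖x - y‖ ^ β = (‖x - y‖ ^ 2) ^ (β / 2) := by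
        rw [← Real.rpow_natCast, ← Real.rpow_mul (norm_nonneg _)]
        congr 1
        push_cast
        ring
    _ ≤ _ := (Real.rpow_le_rpow (by positivity) hsq (by positivity)).trans_eq
        (Real.mul_rpow (by positivity) (by positivity))

variable {V : Type*} [NormedAddCommGroup V] [InnerProductSpace ℝ V] [FiniteDimensional ℝ V]
  [MeasurableSpace V] [BorelSpace V] (μ : Measure V) [μ.IsAddHaarMeasure]

theorem lintegral_one_add_norm_sq_rpow_mul_enorm_rpow_ne_top (f : 𝓢(V, ℂ)) (s : ℝ) {q : ℝ}
    (hq : 0 < q) : ∫⁻ x, (‖(1 + ‖x‖ ^ 2) ^ s‖ₑ * ‖f x‖ₑ) ^ q ∂μ ≠ ⊤ := by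
  have hgrowth := Function.hasTemperateGrowth_one_add_norm_sq_rpow V s
  have hfin := lintegral_rpow_enorm_lt_top_of_eLpNorm_lt_top (by simpa) ENNReal.ofReal_ne_top
    ((SchwartzMap.smulLeftCLM ℂ (fun x : V => (1 + ‖x‖ ^ 2) ^ s) f).eLpNorm_lt_top
      (ENNReal.ofReal q) μ)
  simpa only [SchwartzMap.smulLeftCLM_apply_apply hgrowth, enorm_smul,
    ENNReal.toReal_ofReal hq.le] using hfin.ne

theorem lintegral_norm_sub_rpow_mul_schwartz_ne_top (f g : 𝓢(V, ℂ)) {β q : ℝ} (hβ : 0 ≤ β)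
    (hq : 0 < q) :
    ∫⁻ x, ∫⁻ y, (‖x - y‖ₑ ^ β * (‖f x‖ₑ * ‖g y‖ₑ)) ^ q ∂μ ∂μ ≠ ⊤ := by
  let w (h : 𝓢(V, ℂ)) (x : V) : ℝ≥0∞ := (‖(1 + ‖x‖ ^ 2) ^ (β / 2)‖ₑ * ‖h x‖ₑ) ^ q
  have hw (h : 𝓢(V, ℂ)) : ∫⁻ x, w h x ∂μ ≠ ⊤ :=
    lintegral_one_add_norm_sq_rpow_mul_enorm_rpow_ne_top μ h (β / 2) hq
  have hpeetre (x y : V) : ‖x - y‖ₑ ^ β ≤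
      ‖(1 + ‖x‖ ^ 2) ^ (β / 2)‖ₑ * ‖(1 + ‖y‖ ^ 2) ^ (β / 2)‖ₑ := by
    rw [← enorm_norm, ← Real.enorm_rpow_of_nonneg (norm_nonneg _) hβ, ← enorm_mul,
      enorm_le_iff_norm_le, Real.norm_of_nonneg (by positivity),
      Real.norm_of_nonneg (by positivity)]
    exact norm_sub_rpow_le hβ x y
  have hle (x y : V) : (‖x - y‖ₑ ^ β * (‖f x‖ₑ * ‖g y‖ₑ)) ^ q ≤ w f x * w g y := by
    rw [← ENNReal.mul_rpow_of_nonneg _ _ hq.le, mul_mul_mul_comm]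
    gcongr
    exact hpeetre x y
  have hwm : Measurable (w g) := by
    have := g.continuous
    fun_prop
  refine ne_top_of_le_ne_top (ENNReal.mul_ne_top (hw f) (hw g)) ?_
  calc ∫⁻ x, ∫⁻ y, (‖x - y‖ₑ ^ β * (‖f x‖ₑ * ‖g y‖ₑ)) ^ q ∂μ ∂μ
      ≤ ∫⁻ x, ∫⁻ y, w f x * w g y ∂μ ∂μ :=
        lintegral_mono fun x => lintegral_mono fun y => hle x y
    _ = _ := by
        simp_rw [lintegral_const_mul _ hwm]
        rw [lintegral_mul_const'' _ (by have := f.continuous; fun_prop)]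

end Schwartz

section MeanZero

theorem enorm_integral_mul_le_of_integral_eq_zero {V : Type*} [MeasurableSpace V]
    {μ : Measure V} {η k g : V → ℂ} (hη : ∫ x, η x ∂μ = 1) (hk : Integrable k μ)
    (hk0 : ∫ x, k x ∂μ = 0) (hkg : Integrable (fun x => k x * g x) μ) :
    ‖∫ x, k x * g x ∂μ‖ₑ ≤ ∫⁻ x, ∫⁻ y, ‖η x‖ₑ * ‖k y‖ₑ * ‖g x - g y‖ₑ ∂μ ∂μ := by
  have hrepr (x : V) : ∫ y, k y * g y ∂μ = ∫ y, k y * (g y - g x) ∂μ := by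
    simp_rw [mul_sub]
    rw [integral_sub hkg (hk.mul_const _), integral_mul_const, hk0, zero_mul, sub_zero]
  calc ‖∫ x, k x * g x ∂μ‖ₑ = ‖∫ x, η x * ∫ y, k y * g y ∂μ ∂μ‖ₑ := by
        rw [integral_mul_const, hη, one_mul]
    _ ≤ ∫⁻ x, ‖η x‖ₑ * ∫⁻ y, ‖k y‖ₑ * ‖g x - g y‖ₑ ∂μ ∂μ := by
        refine (enorm_integral_le_lintegral_enorm _).trans (lintegral_mono fun x => ?_)
        rw [enorm_mul, hrepr x]
        gcongr
        refine (enorm_integral_le_lintegral_enorm _).trans_eq ?_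
        simp_rw [enorm_mul, enorm_sub_rev (g x)]
    _ = _ := by simp_rw [mul_assoc, lintegral_const_mul' _ _ enorm_ne_top]

theorem exists_schwartzMap_integral_eq_one {V : Type*} [NormedAddCommGroup V]
    [InnerProductSpace ℝ V] [FiniteDimensional ℝ V] [MeasurableSpace V] [BorelSpace V]
    (μ : Measure V) [μ.IsAddHaarMeasure] : ∃ η : 𝓢(V, ℂ), ∫ x, η x ∂μ = 1 := by
  let b : ContDiffBump (0 : V) := ⟨1, 2, one_pos, one_lt_two⟩
  let η : 𝓢(V, ℂ) := HasCompactSupport.toSchwartzMap (f := fun x => (b.normed μ x : ℂ))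
    (b.hasCompactSupport_normed.comp_left Complex.ofReal_zero)
    (Complex.ofRealCLM.contDiff.comp b.contDiff_normed)
  refine ⟨η, ?_⟩
  change ∫ x, (b.normed μ x : ℂ) ∂μ = 1
  rw [integral_complex_ofReal, b.integral_normed, Complex.ofReal_one]

theorem exists_enorm_integral_mul_le_gagliardo {d : ℕ} {r p : ℝ} (hp : 1 < p) (hr : 0 ≤ r + d / p)
    (k : 𝓢(Ed d, ℂ)) (hk : ∫ x, k x = 0) :
    ∃ C : ℝ≥0, ∀ g : Ed d → ℂ, StronglyMeasurable g → Integrable (fun x => k x * g x) →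
      ‖∫ x, k x * g x‖ₑ ≤ C * gagliardo d r p g := by
  have hpq := Real.HolderConjugate.conjExponent hp
  obtain ⟨η, hη⟩ := exists_schwartzMap_integral_eq_one (volume : Measure (Ed d))
  set q := p.conjExponent
  let W (w : Ed d × Ed d) : ℝ≥0∞ := ‖η w.1‖ₑ * ‖k w.2‖ₑ
  have hW : Measurable W := by
    have := η.continuous
    have := k.continuous
    fun_prop
  have hfin : (∫⁻ x, ∫⁻ y, (‖x - y‖ₑ ^ (r + d / p) * W (x, y)) ^ q) ^ (1 / q) ≠ ⊤ :=
    ENNReal.rpow_ne_top_of_nonneg (by simpa using hpq.symm.nonneg)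
      (lintegral_norm_sub_rpow_mul_schwartz_ne_top volume η k hr hpq.symm.pos)
  lift (∫⁻ x, ∫⁻ y, (‖x - y‖ₑ ^ (r + d / p) * W (x, y)) ^ q) ^ (1 / q) to ℝ≥0 using hfin
    with C hC
  refine ⟨C, fun g hg hkg => ?_⟩
  rw [hC, mul_comm]
  exact (enorm_integral_mul_le_of_integral_eq_zero hη k.integrable hk hkg).trans
    (lintegral_mul_enorm_sub_le_gagliardo hpq hg hW)

end MeanZero

section Multiplier

variable {V : Type*} [NormedAddCommGroup V] [InnerProductSpace ℝ V] [FiniteDimensional ℝ V]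
  [MeasurableSpace V] [BorelSpace V]

/-- The Fourier multiplier `m(D)` in Mathlib's normalisation `𝓕 f ξ = ∫ e^{-2πi⟪x, ξ⟫} f x`. Here
`m` is any function: `SchwartzMap.fourierMultiplierCLM` asks for a smooth symbol, whereas a symbol
that is homogeneous of degree `0` is singular at the origin. -/
noncomputable def multiplierOp (m f : V → ℂ) : V → ℂ :=
  𝓕⁻ fun ξ => m ξ * 𝓕 f ξ

theorem multiplierOp_eq_integral (m f : V → ℂ) (x : V) :
    multiplierOp m f x = ∫ ξ, 𝐞 ⟪ξ, x⟫ • (m ξ * 𝓕 f ξ) :=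
  Real.fourierInv_eq _ _

theorem enorm_multiplierOp_le (m f : V → ℂ) (x : V) :
    ‖multiplierOp m f x‖ₑ ≤ ∫⁻ ξ, ‖m ξ‖ₑ * ‖𝓕 f ξ‖ₑ := by
  rw [multiplierOp_eq_integral]
  refine (enorm_integral_le_lintegral_enorm _).trans_eq ?_
  simp only [← ofReal_norm, Circle.norm_smul, norm_mul, ENNReal.ofReal_mul (norm_nonneg _)]

theorem integrable_fourierChar_inner_smul {g : V → ℂ} (hg : Integrable g) (x : V) :
    Integrable fun ξ => 𝐞 ⟪ξ, x⟫ • g ξ := by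
  simpa only [inner_neg_right, neg_neg] using (Real.fourierIntegral_convergent_iff (-x)).mpr hg

theorem multiplierOp_sub {m₁ m₂ f : V → ℂ} (h₁ : Integrable fun ξ => m₁ ξ * 𝓕 f ξ)
    (h₂ : Integrable fun ξ => m₂ ξ * 𝓕 f ξ) (x : V) :
    multiplierOp (fun ξ => m₁ ξ - m₂ ξ) f x = multiplierOp m₁ f x - multiplierOp m₂ f x := by
  simp only [multiplierOp_eq_integral, sub_mul, smul_sub]
  exact integral_sub (integrable_fourierChar_inner_smul h₁ x)
    (integrable_fourierChar_inner_smul h₂ x)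

theorem fourier_comp_add_smul (f : V → ℂ) (x : V) {c : ℝ} (hc : c ≠ 0) (ξ : V) :
    𝓕 (fun u => f (x + c • u)) ξ =
      |(c ^ finrank ℝ V)⁻¹| • 𝐞 ⟪x, c⁻¹ • ξ⟫ • 𝓕 f (c⁻¹ • ξ) := by
  let G (y : V) : ℂ := 𝐞 ⟪x, c⁻¹ • ξ⟫ • 𝐞 (-⟪y, c⁻¹ • ξ⟫) • f y
  have hG (u : V) : 𝐞 (-⟪u, ξ⟫) • f (x + c • u) = G (x + c • u) := by
    simp only [G]
    rw [← mul_smul (𝐞 _), ← AddChar.map_add_eq_mul, inner_add_left, real_inner_smul_left,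
      real_inner_smul_right u, mul_inv_cancel_left₀ hc, neg_add, add_neg_cancel_left]
  rw [Real.fourier_eq, Real.fourier_eq]
  simp_rw [hG]
  rw [Measure.integral_comp_smul volume (fun v => G (x + v)), integral_add_left_eq_self G x]
  simp only [G, Circle.smul_def, integral_smul]

theorem multiplierOp_comp_smul (m : 𝓢(V, ℂ)) {f : V → ℂ} (hf : Integrable f) (x : V) {c : ℝ}
    (hc : c ≠ 0) :
    multiplierOp (fun ξ => m (c • ξ)) f x = ∫ u, 𝓕 m u * f (x + c • u) := by
  let H (ξ : V) : ℂ := 𝐞 ⟪ξ, x⟫ • (m (c • ξ) * 𝓕 f ξ)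
  have hg : Integrable fun u => f (x + c • u) := (hf.comp_add_left x).comp_smul hc
  have hparseval : ∫ u, 𝓕 m u * f (x + c • u) = ∫ ξ, m ξ * 𝓕 (fun u => f (x + c • u)) ξ := by
    simpa using! VectorFourier.integral_fourierIntegral_smul_eq_flip (L := innerₗ V)
      Real.continuous_fourierChar continuous_inner (m.integrable (μ := volume)) hg
  have hH (ξ : V) : m ξ * 𝓕 (fun u => f (x + c • u)) ξ =
      |(c ^ finrank ℝ V)⁻¹| • H (c⁻¹ • ξ) := by
    simp only [H, fourier_comp_add_smul f x hc, smul_inv_smul₀ hc, real_inner_comm x, mul_smul_comm]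
  simp_rw [hparseval, hH]
  rw [integral_smul, Measure.integral_comp_smul volume H, smul_smul, ← abs_mul, inv_pow, inv_inv,
    inv_mul_cancel₀ (pow_ne_zero _ hc), abs_one, one_smul, multiplierOp_eq_integral]

theorem integral_fourier_eq_apply_zero (m : 𝓢(V, ℂ)) : ∫ u, 𝓕 m u = m 0 := by
  have hinv : (𝓕⁻ (𝓕 m)) 0 = m 0 := by rw [FourierTransform.fourierInv_fourier_eq]
  rw [SchwartzMap.fourierInv_coe, Real.fourierInv_eq] at hinv
  simpa using hinv

variable {M : ℝ}

theorem integrable_mul_fourier (f : 𝓢(V, ℂ)) {m : V → ℂ} (hm : Measurable m)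
    (hM : ∀ ξ, ‖m ξ‖ ≤ M) : Integrable fun ξ => m ξ * 𝓕 (f : V → ℂ) ξ :=
  (𝓕 f).integrable.bdd_mul hm.aestronglyMeasurable (ae_of_all _ hM)

theorem tendsto_multiplierOp {ι : Type*} {l : Filter ι} [l.IsCountablyGenerated]
    (f : 𝓢(V, ℂ)) {m : ι → V → ℂ} {m₀ : V → ℂ} (hm : ∀ i, Measurable (m i))
    (hM : ∀ i ξ, ‖m i ξ‖ ≤ M) (hlim : ∀ ξ, Tendsto (m · ξ) l (𝓝 (m₀ ξ))) (x : V) :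
    Tendsto (fun i => multiplierOp (m i) f x) l (𝓝 (multiplierOp m₀ f x)) := by
  simp only [multiplierOp_eq_integral]
  refine tendsto_integral_filter_of_dominated_convergence (fun ξ => M * ‖𝓕 f ξ‖)
    (.of_forall fun i => ?_) (.of_forall fun i => .of_forall fun ξ => ?_)
    ((𝓕 f).integrable.norm.const_mul M)
    (.of_forall fun ξ => ((hlim ξ).mul_const _).const_smul _)
  · exact (integrable_fourierChar_inner_smul (integrable_mul_fourier f (hm i) (hM i)) x).1
  · rw [Circle.norm_smul, norm_mul, ← SchwartzMap.fourier_coe]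
    gcongr
    exact hM i ξ

end Multiplier

section LowPass

variable {V : Type*} [NormedAddCommGroup V] [InnerProductSpace ℝ V] [FiniteDimensional ℝ V]

/-- A smooth low-pass cutoff, equal to `1` on the unit ball and to `0` outside the ball of radius
`2`. It truncates symbols, which are complex-valued, hence the target `ℂ`. -/
noncomputable def lowPass (ξ : V) : ℂ :=
  ((⟨1, 2, one_pos, one_lt_two⟩ : ContDiffBump (0 : V)) ξ : ℝ)

theorem lowPass_of_norm_le_one {ξ : V} (hξ : ‖ξ‖ ≤ 1) : lowPass ξ = 1 := by
  rw [lowPass, ContDiffBump.one_of_mem_closedBall _ (by simpa using hξ), Complex.ofReal_one]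

theorem lowPass_of_two_le_norm {ξ : V} (hξ : 2 ≤ ‖ξ‖) : lowPass ξ = 0 := by
  rw [lowPass, ContDiffBump.zero_of_le_dist _ (by simpa using hξ), Complex.ofReal_zero]

theorem norm_lowPass_le_one (ξ : V) : ‖lowPass ξ‖ ≤ 1 := by
  rw [lowPass, Complex.norm_of_nonneg (ContDiffBump.nonneg _)]
  exact ContDiffBump.le_one _

theorem contDiff_lowPass : ContDiff ℝ (⊤ : ℕ∞) (lowPass : V → ℂ) :=
  Complex.ofRealCLM.contDiff.comp (ContDiffBump.contDiff _)

/-- The cutoff to the frequency shell `1 ≤ ‖ξ‖ ≤ 4`; its dilates by powers of `2` telescope. -/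
noncomputable def dyadicShell (ξ : V) : ℂ :=
  lowPass ((2 : ℝ)⁻¹ • ξ) - lowPass ξ

theorem dyadicShell_of_norm_le_one {ξ : V} (hξ : ‖ξ‖ ≤ 1) : dyadicShell ξ = 0 := by
  have hhalf : ‖(2 : ℝ)⁻¹ • ξ‖ ≤ 1 := by
    rw [norm_smul, norm_inv, Real.norm_ofNat]
    linarith
  rw [dyadicShell, lowPass_of_norm_le_one hhalf, lowPass_of_norm_le_one hξ, sub_self]

theorem contDiff_dyadicShell : ContDiff ℝ (⊤ : ℕ∞) (dyadicShell : V → ℂ) :=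
  (contDiff_lowPass.comp (contDiff_const_smul _)).sub contDiff_lowPass

theorem hasCompactSupport_dyadicShell : HasCompactSupport (dyadicShell : V → ℂ) := by
  refine .of_support_subset_isCompact (isCompact_closedBall 0 4) fun ξ hξ => ?_
  contrapose! hξ
  have hfour : 4 < ‖ξ‖ := by simpa using hξ
  have hhalf : 2 ≤ ‖(2 : ℝ)⁻¹ • ξ‖ := by
    rw [norm_smul, norm_inv, Real.norm_ofNat]
    linarith
  simp only [Function.mem_support, not_not, dyadicShell, lowPass_of_two_le_norm hhalf,
    lowPass_of_two_le_norm (by linarith : 2 ≤ ‖ξ‖), sub_self]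

end LowPass

namespace IsSymbol0

variable {d : ℕ} {a : Ed d → ℂ}

theorem map_smul (ha : IsSymbol0 d a) {c : ℝ} (hc : 0 < c) (ξ : Ed d) : a (c • ξ) = a ξ := by
  rcases eq_or_ne ξ 0 with rfl | hξ
  · rw [smul_zero]
  · exact ha.2 c ξ hc hξ

theorem measurable (ha : IsSymbol0 d a) : Measurable a :=
  measurable_of_continuousOn_compl_singleton 0 ha.1.continuousOn

theorem exists_norm_le (ha : IsSymbol0 d a) : ∃ M : ℝ, ∀ ξ, ‖a ξ‖ ≤ M := by
  have hsphere : ContinuousOn a (sphere 0 1) :=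
    ha.1.continuousOn.mono fun ξ hξ => ne_of_mem_sphere hξ one_ne_zero
  obtain ⟨M, hM⟩ := (isCompact_sphere (0 : Ed d) 1).exists_bound_of_continuousOn hsphere
  refine ⟨max ‖a 0‖ M, fun ξ => ?_⟩
  rcases eq_or_ne ξ 0 with rfl | hξ
  · exact le_max_left _ _
  · rw [← ha.map_smul (inv_pos.mpr (norm_pos_iff.mpr hξ)) ξ]
    exact (hM _ (by simp [norm_smul, hξ])).trans (le_max_right _ _)

theorem exists_schwartzMap_eq_mul_dyadicShell (ha : IsSymbol0 d a) :
    ∃ m : 𝓢(Ed d, ℂ), ∀ ξ, m ξ = a ξ * dyadicShell ξ := by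
  have hsmooth : ContDiff ℝ (⊤ : ℕ∞) fun ξ => a ξ * dyadicShell ξ := by
    refine contDiff_iff_contDiffAt.mpr fun ξ => ?_
    rcases eq_or_ne ξ 0 with rfl | hξ
    · refine contDiffAt_const (c := (0 : ℂ)) |>.congr_of_eventuallyEq ?_
      filter_upwards [closedBall_mem_nhds (0 : Ed d) one_pos] with ξ hξ
      rw [dyadicShell_of_norm_le_one (by simpa using hξ), mul_zero]
    · exact (ha.1.contDiffAt (isOpen_compl_singleton.mem_nhds hξ)).mul
        contDiff_dyadicShell.contDiffAt
  exact ⟨hasCompactSupport_dyadicShell.mul_left.toSchwartzMap hsmooth, fun _ => rfl⟩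

end IsSymbol0

section Truncation

variable {V : Type*} [NormedAddCommGroup V] [InnerProductSpace ℝ V] [FiniteDimensional ℝ V]

/-- The symbol `a` truncated to the frequencies `‖ξ‖ < 2 / c`. -/
noncomputable def truncSymbol (a : V → ℂ) (c : ℝ) (ξ : V) : ℂ :=
  a ξ * lowPass (c • ξ)

variable {a : V → ℂ}

theorem norm_truncSymbol_le (c : ℝ) (ξ : V) : ‖truncSymbol a c ξ‖ ≤ ‖a ξ‖ := by
  rw [truncSymbol, norm_mul]
  exact mul_le_of_le_one_right (norm_nonneg _) (norm_lowPass_le_one _)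

theorem truncSymbol_of_two_le {c : ℝ} {ξ : V} (h : 2 ≤ c * ‖ξ‖) : truncSymbol a c ξ = 0 := by
  have hcξ : 2 ≤ ‖c • ξ‖ := by
    rw [norm_smul]
    exact h.trans (by gcongr; exact le_abs_self c)
  rw [truncSymbol, lowPass_of_two_le_norm hcξ, mul_zero]

theorem tendsto_truncSymbol (ξ : V) :
    Tendsto (fun c => truncSymbol a c ξ) (𝓝 0) (𝓝 (a ξ)) := by
  have hcont : Continuous fun c : ℝ => truncSymbol a c ξ :=
    continuous_const.mul (contDiff_lowPass.continuous.comp (by fun_prop))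
  simpa [truncSymbol, lowPass_of_norm_le_one] using hcont.tendsto 0

theorem measurable_truncSymbol [MeasurableSpace V] [BorelSpace V] (ha : Measurable a) (c : ℝ) :
    Measurable (truncSymbol a c) :=
  ha.mul (contDiff_lowPass.continuous.comp (continuous_const_smul c)).measurable

theorem IsSymbol0.truncSymbol_half_sub {d : ℕ} {a : Ed d → ℂ} (ha : IsSymbol0 d a)
    {c : ℝ} (hc : 0 < c) (ξ : Ed d) :
    truncSymbol a (2⁻¹ * c) ξ - truncSymbol a c ξ = a (c • ξ) * dyadicShell (c • ξ) := by
  rw [truncSymbol, truncSymbol, dyadicShell, ha.map_smul hc, mul_smul, mul_sub]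

end Truncation

section Normalisation

variable {d : ℕ} (f : Ed d → ℂ)

theorem ftransform_two_pi_smul (ξ : Ed d) : ftransform d f ((2 * Real.pi) • ξ) = 𝓕 f ξ := by
  rw [ftransform, Real.fourier_eq']
  refine integral_congr_ae (.of_forall fun x => ?_)
  simp only [real_inner_smul_right, smul_eq_mul]
  congr 2
  push_cast
  ring

theorem IsSymbol0.symbOp_eq_multiplierOp {a : Ed d → ℂ} (ha : IsSymbol0 d a) :
    symbOp d a f = multiplierOp a f := by
  ext x
  have hscale := Measure.integral_comp_smul volume (fun κ : Ed d =>
    Complex.exp (Complex.I * (⟪x, κ⟫ : ℂ)) * a κ * ftransform d f κ) (2 * Real.pi)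
  have hjac : |((2 * Real.pi) ^ finrank ℝ (Ed d))⁻¹| = (2 * Real.pi) ^ (-(d : ℝ)) := by
    rw [finrank_euclideanSpace_fin, abs_of_pos (by positivity), Real.rpow_neg (by positivity),
      Real.rpow_natCast]
  rw [hjac, Complex.real_smul] at hscale
  rw [symbOp, ← hscale, multiplierOp, Real.fourierInv_eq']
  refine integral_congr_ae (.of_forall fun ξ => ?_)
  simp only [ftransform_two_pi_smul, ha.map_smul Real.two_pi_pos, real_inner_smul_right,
    real_inner_comm x, smul_eq_mul, mul_assoc]
  congr 2
  push_cast
  ring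

theorem sobolevSemi_eq_lintegral_fourier (θ : ℝ) :
    sobolevSemi d θ f = ‖2 * Real.pi‖ₑ ^ θ *
      (∫⁻ ξ, (‖ξ‖ₑ ^ θ * ‖𝓕 f ξ‖ₑ) ^ (2 : ℝ)) ^ (1 / 2 : ℝ) := by
  have hscale := lintegral_comp_add_smul volume
    (fun κ : Ed d => ‖κ‖ₑ ^ (2 * θ) * ‖ftransform d f κ‖ₑ ^ 2) 0 Real.two_pi_pos.ne'
  have hjac : ENNReal.ofReal ((2 * Real.pi) ^ (-(d : ℝ))) = ‖2 * Real.pi‖ₑ ^ (-(d : ℝ)) := by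
    rw [← ENNReal.ofReal_rpow_of_pos Real.two_pi_pos, Real.enorm_of_nonneg Real.two_pi_pos.le]
  have hsq (ξ : Ed d) : ‖(2 * Real.pi) • ξ‖ₑ ^ (2 * θ) * ‖𝓕 f ξ‖ₑ ^ 2 =
      ‖2 * Real.pi‖ₑ ^ (2 * θ) * (‖ξ‖ₑ ^ θ * ‖𝓕 f ξ‖ₑ) ^ (2 : ℝ) := by
    rw [enorm_smul, ENNReal.mul_rpow_of_ne_top enorm_ne_top enorm_ne_top,
      ENNReal.mul_rpow_of_nonneg _ _ zero_le_two, ← ENNReal.rpow_mul, mul_comm θ,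
      ENNReal.rpow_two, mul_assoc]
  simp only [zero_add, ftransform_two_pi_smul, hsq, finrank_euclideanSpace_fin] at hscale
  rw [lintegral_const_mul' _ _ (enorm_rpow_ne_top Real.two_pi_pos.ne' _)] at hscale
  rw [sobolevSemi, hjac]
  refine (congrArg (· ^ (1 / 2 : ℝ)) hscale.symm).trans ?_
  rw [ENNReal.mul_rpow_of_nonneg _ _ (by norm_num), ← ENNReal.rpow_mul]
  ring_nf

end Normalisation

section LowFrequency

variable {d : ℕ} {θ : ℝ}

theorem setLIntegral_ball_le {V : Type*} [NormedAddCommGroup V] [NormedSpace ℝ V]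
    [FiniteDimensional ℝ V] [Nontrivial V] [MeasurableSpace V] [BorelSpace V] (μ : Measure V)
    [μ.IsAddHaarMeasure] {g : V → ℝ≥0∞} (hg : Measurable g) (θ : ℝ) {R : ℝ} (hR : 0 < R) :
    ∫⁻ ξ in ball 0 R, g ξ ∂μ ≤
      ‖R‖ₑ ^ (finrank ℝ V / 2 - θ) * (∫⁻ ξ in ball 0 1, ‖ξ‖ₑ ^ (-(2 * θ)) ∂μ) ^ (1 / 2 : ℝ) *
        (∫⁻ ξ, (‖ξ‖ₑ ^ θ * g ξ) ^ (2 : ℝ) ∂μ) ^ (1 / 2 : ℝ) := by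
  have hweight : ∀ᵐ ξ ∂μ.restrict (ball 0 R),
      g ξ = ‖ξ‖ₑ ^ (-θ) * (‖ξ‖ₑ ^ θ * g ξ) := by
    filter_upwards [ae_restrict_of_ae (Measure.ae_ne μ 0)] with ξ hξ
    rw [← mul_assoc, ← ENNReal.rpow_add _ _ (by simpa) enorm_ne_top, neg_add_cancel,
      ENNReal.rpow_zero, one_mul]
  have hscale : (∫⁻ ξ in ball 0 R, (‖ξ‖ₑ ^ (-θ)) ^ (2 : ℝ) ∂μ) ^ (1 / 2 : ℝ) =
      ‖R‖ₑ ^ (finrank ℝ V / 2 - θ) *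
        (∫⁻ ξ in ball 0 1, ‖ξ‖ₑ ^ (-(2 * θ)) ∂μ) ^ (1 / 2 : ℝ) := by
    simp_rw [← ENNReal.rpow_mul, neg_mul, mul_comm θ]
    rw [setLIntegral_ball_enorm_rpow μ _ hR, ENNReal.mul_rpow_of_nonneg _ _ (by norm_num),
      ← ENNReal.rpow_mul]
    congr 2
    ring
  calc ∫⁻ ξ in ball 0 R, g ξ ∂μ
      = ∫⁻ ξ in ball 0 R, ‖ξ‖ₑ ^ (-θ) * (‖ξ‖ₑ ^ θ * g ξ) ∂μ := lintegral_congr_ae hweight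
    _ ≤ (∫⁻ ξ in ball 0 R, (‖ξ‖ₑ ^ (-θ)) ^ (2 : ℝ) ∂μ) ^ (1 / 2 : ℝ) *
          (∫⁻ ξ in ball 0 R, (‖ξ‖ₑ ^ θ * g ξ) ^ (2 : ℝ) ∂μ) ^ (1 / 2 : ℝ) :=
        ENNReal.lintegral_mul_le_Lp_mul_Lq _ .two_two (by fun_prop) (by fun_prop)
    _ ≤ _ := by
        rw [hscale]
        gcongr
        exact Measure.restrict_le_self

theorem exists_setLIntegral_ball_enorm_fourier_le (hd : 1 ≤ d) (hθ : θ < d / 2) :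
    ∃ C : ℝ≥0, ∀ f : Ed d → ℂ, Measurable (𝓕 f) → ∀ R : ℝ, 0 < R →
      ∫⁻ ξ in ball 0 R, ‖𝓕 f ξ‖ₑ ≤ C * ‖R‖ₑ ^ (d / 2 - θ) * sobolevSemi d θ f := by
  have : Nonempty (Fin d) := ⟨⟨0, hd⟩⟩
  set I : ℝ≥0∞ := ∫⁻ ξ : Ed d in ball 0 1, ‖ξ‖ₑ ^ (-(2 * θ))
  have hI : I ≠ ⊤ := setLIntegral_ball_enorm_rpow_ne_top volume
    (by rw [finrank_euclideanSpace_fin]; linarith) 1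
  have hfin : I ^ (1 / 2 : ℝ) * ‖2 * Real.pi‖ₑ ^ (-θ) ≠ ⊤ :=
    ENNReal.mul_ne_top (ENNReal.rpow_ne_top_of_nonneg (by norm_num) hI)
      (enorm_rpow_ne_top Real.two_pi_pos.ne' _)
  have hcancel : ‖2 * Real.pi‖ₑ ^ (-θ) * ‖2 * Real.pi‖ₑ ^ θ = 1 := by
    rw [← ENNReal.rpow_add _ _ (by simp) enorm_ne_top, neg_add_cancel, ENNReal.rpow_zero]
  lift I ^ (1 / 2 : ℝ) * ‖2 * Real.pi‖ₑ ^ (-θ) to ℝ≥0 using hfin with C hC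
  refine ⟨C, fun f hf R hR => ?_⟩
  set L : ℝ≥0∞ := (∫⁻ ξ, (‖ξ‖ₑ ^ θ * ‖𝓕 f ξ‖ₑ) ^ (2 : ℝ)) ^ (1 / 2 : ℝ) with hL
  calc ∫⁻ ξ in ball 0 R, ‖𝓕 f ξ‖ₑ
      ≤ ‖R‖ₑ ^ (d / 2 - θ) * I ^ (1 / 2 : ℝ) * L := by
        simpa only [finrank_euclideanSpace_fin] using setLIntegral_ball_le volume hf.enorm θ hR
    _ = ‖2 * Real.pi‖ₑ ^ (-θ) * ‖2 * Real.pi‖ₑ ^ θ *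
          (‖R‖ₑ ^ (d / 2 - θ) * I ^ (1 / 2 : ℝ) * L) := by rw [hcancel, one_mul]
    _ = C * ‖R‖ₑ ^ (d / 2 - θ) * sobolevSemi d θ f := by
        rw [hC, sobolevSemi_eq_lintegral_fourier, ← hL]
        ring

theorem IsSymbol0.exists_enorm_multiplierOp_truncSymbol_le {a : Ed d → ℂ} (ha : IsSymbol0 d a)
    (hd : 1 ≤ d) (hθ : θ < d / 2) :
    ∃ C : ℝ≥0, ∀ f : 𝓢(Ed d, ℂ), ∀ x, ∀ c : ℝ, 0 < c →
      ‖multiplierOp (truncSymbol a c) f x‖ₑ ≤ C * ‖c‖ₑ ^ (-(d / 2 - θ)) * sobolevSemi d θ f := by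
  obtain ⟨M, hM⟩ := ha.exists_norm_le
  obtain ⟨C, hC⟩ := exists_setLIntegral_ball_enorm_fourier_le hd hθ
  have hM0 : 0 ≤ M := (norm_nonneg _).trans (hM 0)
  lift M to ℝ≥0 using hM0
  refine ⟨M * C * 2 ^ (d / 2 - θ), fun f x c hc => ?_⟩
  have hsupp (ξ : Ed d) : ‖truncSymbol a c ξ‖ₑ * ‖𝓕 (f : Ed d → ℂ) ξ‖ₑ ≤
      (ball 0 (2 / c)).indicator (fun ξ => M * ‖𝓕 (f : Ed d → ℂ) ξ‖ₑ) ξ := by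
    by_cases hξ : ξ ∈ ball (0 : Ed d) (2 / c)
    · rw [Set.indicator_of_mem hξ]
      gcongr
      exact enorm_le_coe.mpr ((norm_truncSymbol_le c ξ).trans (hM ξ))
    · have htwo : 2 ≤ c * ‖ξ‖ := by
        rwa [mem_ball_zero_iff, not_lt, div_le_iff₀' hc] at hξ
      rw [truncSymbol_of_two_le htwo, enorm_zero, zero_mul]
      exact bot_le
  calc ‖multiplierOp (truncSymbol a c) f x‖ₑ
      ≤ ∫⁻ ξ in ball 0 (2 / c), M * ‖𝓕 (f : Ed d → ℂ) ξ‖ₑ := by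
        rw [← lintegral_indicator measurableSet_ball]
        exact (enorm_multiplierOp_le _ _ _).trans (lintegral_mono hsupp)
    _ ≤ M * (C * ‖2 / c‖ₑ ^ (d / 2 - θ) * sobolevSemi d θ f) := by
        rw [lintegral_const_mul' _ _ ENNReal.coe_ne_top]
        gcongr
        exact hC f (𝓕 f).continuous.measurable _ (by positivity)
    _ = _ := by
        have hexp : ‖2 / c‖ₑ ^ (d / 2 - θ) = 2 ^ (d / 2 - θ) * ‖c‖ₑ ^ (-(d / 2 - θ)) := by
          rw [div_eq_mul_inv, enorm_mul, enorm_inv hc.ne', Real.enorm_of_nonneg zero_le_two,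
            ENNReal.ofReal_ofNat, ENNReal.mul_rpow_of_nonneg _ _ (by linarith), ENNReal.inv_rpow,
            ENNReal.rpow_neg]
        rw [hexp]
        push_cast [ENNReal.coe_rpow_of_nonneg 2 (sub_nonneg.mpr hθ.le)]
        ring

end LowFrequency

section HighFrequency

variable {d : ℕ} {r p : ℝ} {a : Ed d → ℂ}

theorem IsSymbol0.exists_edist_multiplierOp_truncSymbol_half_le (ha : IsSymbol0 d a)
    (hp : 1 < p) (hr : 0 ≤ r + d / p) :
    ∃ C : ℝ≥0, ∀ f : 𝓢(Ed d, ℂ), ∀ x, ∀ c : ℝ, 0 < c →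
      edist (multiplierOp (truncSymbol a c) f x) (multiplierOp (truncSymbol a (2⁻¹ * c)) f x) ≤
        C * ‖c‖ₑ ^ (r - d / p) * gagliardo d r p f := by
  obtain ⟨M, hM⟩ := ha.exists_norm_le
  obtain ⟨m, hm⟩ := ha.exists_schwartzMap_eq_mul_dyadicShell
  have hk : ∫ u, 𝓕 m u = 0 := by
    rw [integral_fourier_eq_apply_zero, hm, dyadicShell_of_norm_le_one (by simp), mul_zero]
  obtain ⟨C, hC⟩ := exists_enorm_integral_mul_le_gagliardo hp hr (𝓕 m) hk
  refine ⟨C, fun f x c hc => ?_⟩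
  have hint (b : ℝ) : Integrable fun ξ => truncSymbol a b ξ * 𝓕 (f : Ed d → ℂ) ξ :=
    integrable_mul_fourier f (measurable_truncSymbol ha.measurable b)
      fun ξ => (norm_truncSymbol_le b ξ).trans (hM ξ)
  have hpiece : multiplierOp (truncSymbol a (2⁻¹ * c)) f x - multiplierOp (truncSymbol a c) f x =
      ∫ u, 𝓕 m u * f (x + c • u) := by
    rw [← multiplierOp_comp_smul m f.integrable x hc.ne', ← multiplierOp_sub (hint _) (hint _)]
    simp only [ha.truncSymbol_half_sub hc, hm]
  have hcont : Continuous fun u => f (x + c • u) := by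
    have := f.continuous
    fun_prop
  obtain ⟨B, -, hB⟩ := f.decay 0 0
  have hprod : Integrable fun u => 𝓕 m u * f (x + c • u) :=
    (𝓕 m).integrable.mul_bdd hcont.aestronglyMeasurable
      (ae_of_all _ fun u => by simpa using hB (x + c • u))
  rw [edist_comm, edist_eq_enorm_sub, hpiece, mul_assoc,
    ← gagliardo_comp_add_smul (by linarith) f x hc.ne']
  exact hC _ hcont.stronglyMeasurable hprod

theorem IsSymbol0.tendsto_multiplierOp_truncSymbol (ha : IsSymbol0 d a) (f : 𝓢(Ed d, ℂ))
    (x : Ed d) :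
    Tendsto (fun c => multiplierOp (truncSymbol a c) f x) (𝓝 0) (𝓝 (multiplierOp a f x)) := by
  obtain ⟨M, hM⟩ := ha.exists_norm_le
  exact tendsto_multiplierOp f (measurable_truncSymbol ha.measurable)
    (fun c ξ => (norm_truncSymbol_le c ξ).trans (hM ξ)) tendsto_truncSymbol x

theorem IsSymbol0.exists_edist_multiplierOp_truncSymbol_le (ha : IsSymbol0 d a) (hp : 1 < p)
    (hrp : d / p < r) :
    ∃ C : ℝ≥0, ∀ f : 𝓢(Ed d, ℂ), ∀ x, ∀ c : ℝ, 0 < c →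
      edist (multiplierOp (truncSymbol a c) f x) (multiplierOp a f x) ≤
        C * ‖c‖ₑ ^ (r - d / p) * gagliardo d r p f := by
  have hdp : 0 ≤ d / p := by positivity
  obtain ⟨C, hC⟩ := ha.exists_edist_multiplierOp_truncSymbol_half_le hp
    (by linarith : 0 ≤ r + d / p)
  have hs : 0 < r - d / p := sub_pos.mpr hrp
  set ρ : ℝ≥0∞ := ‖(2⁻¹ : ℝ)‖ₑ ^ (r - d / p) with hρ
  have hρ1 : ρ < 1 := ENNReal.rpow_lt_one (by
    rw [Real.enorm_of_nonneg (by norm_num)]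
    exact ENNReal.ofReal_lt_one.mpr (by norm_num)) hs
  have hfin : C / (1 - ρ) ≠ ⊤ := ENNReal.div_ne_top ENNReal.coe_ne_top (tsub_pos_of_lt hρ1).ne'
  lift C / (1 - ρ) to ℝ≥0 using hfin with C' hC'
  refine ⟨C', fun f x c hc => ?_⟩
  let T (n : ℕ) : ℂ := multiplierOp (truncSymbol a (2⁻¹ ^ n * c)) f x
  have hT (n : ℕ) : edist (T n) (T (n + 1)) ≤
      C * ‖c‖ₑ ^ (r - d / p) * gagliardo d r p f * ρ ^ n := by
    have hstep := hC f x (2⁻¹ ^ n * c) (by positivity)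
    rw [← mul_assoc, ← pow_succ'] at hstep
    refine hstep.trans_eq ?_
    rw [enorm_mul, enorm_pow, ENNReal.mul_rpow_of_nonneg _ _ hs.le, hρ,
      ← ENNReal.rpow_natCast, ← ENNReal.rpow_mul, mul_comm (n : ℝ), ENNReal.rpow_mul,
      ENNReal.rpow_natCast]
    ring
  have hlim : Tendsto T atTop (𝓝 (multiplierOp a f x)) := by
    refine (ha.tendsto_multiplierOp_truncSymbol f x).comp ?_
    simpa using (tendsto_pow_atTop_nhds_zero_of_lt_one (r := (2⁻¹ : ℝ)) (by norm_num)
      (by norm_num)).mul_const c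
  have hsum := edist_le_of_edist_le_geometric_of_tendsto₀ _ _ hT hlim
  simp only [T, pow_zero, one_mul] at hsum
  refine hsum.trans_eq ?_
  rw [hC', ENNReal.div_eq_inv_mul, ENNReal.div_eq_inv_mul]
  ring

end HighFrequency

section Interpolation

theorem tendsto_enorm_rpow_neg_atTop {s : ℝ} (hs : 0 < s) :
    Tendsto (fun x : ℝ => ‖x‖ₑ ^ (-s)) atTop (𝓝 0) := by
  rw [← ENNReal.ofReal_zero]
  refine (ENNReal.tendsto_ofReal (tendsto_rpow_neg_atTop hs)).congr' ?_
  filter_upwards [eventually_gt_atTop 0] with x hx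
  rw [← ENNReal.ofReal_rpow_of_pos hx, Real.enorm_of_nonneg hx.le]

theorem le_two_mul_rpow_mul_rpow_of_forall_le {N s : ℝ} (hN : 0 < N) (hs : 0 < s)
    {A B V : ℝ≥0∞} (hA0 : A ≠ 0) (hA : A ≠ ⊤)
    (h : ∀ c : ℝ, 0 < c → V ≤ ‖c‖ₑ ^ (-N) * A + ‖c‖ₑ ^ s * B) :
    V ≤ 2 * (A ^ (s / (s + N)) * B ^ (1 - s / (s + N))) := by
  have hsN : 0 < s + N := by positivity
  have hγ : 0 < 1 - s / (s + N) := by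
    rw [sub_pos, div_lt_one hsN]
    linarith
  rcases eq_or_ne B 0 with rfl | hB0
  · have hlim : Tendsto (fun c : ℝ => ‖c‖ₑ ^ (-N) * A) atTop (𝓝 (0 * A)) :=
      ENNReal.Tendsto.mul_const (tendsto_enorm_rpow_neg_atTop hN) (.inr hA)
    rw [zero_mul] at hlim
    refine (ge_of_tendsto hlim ?_).trans bot_le
    filter_upwards [eventually_gt_atTop 0] with c hc
    simpa only [mul_zero, add_zero] using h c hc
  rcases eq_or_ne B ⊤ with rfl | hB
  · have hApow : A ^ (s / (s + N)) ≠ 0 := by simp [ENNReal.rpow_eq_zero_iff, hA0, hA]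
    rw [ENNReal.top_rpow_of_pos hγ, ENNReal.mul_top hApow, ENNReal.mul_top two_ne_zero]
    exact le_top
  -- The two terms balance at `u = (A / B) ^ (1 / (s + N))`, where both equal `u ^ s * B`.
  set u : ℝ≥0∞ := (A / B) ^ (1 / (s + N)) with hu
  have hAB0 : A / B ≠ 0 := ENNReal.div_ne_zero.mpr ⟨hA0, hB⟩
  have hAB : A / B ≠ ⊤ := ENNReal.div_ne_top hA hB0
  have hu0 : u ≠ 0 := (ENNReal.rpow_pos (pos_iff_ne_zero.mpr hAB0) hAB).ne'
  have hutop : u ≠ ⊤ := ENNReal.rpow_ne_top_of_ne_zero hAB0 hAB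
  have hAu : A = u ^ (s + N) * B := by
    rw [hu, ← ENNReal.rpow_mul, one_div_mul_cancel hsN.ne', ENNReal.rpow_one,
      ENNReal.div_mul_cancel hB0 hB]
  have hc : ‖u.toReal‖ₑ = u := by
    rw [Real.enorm_of_nonneg ENNReal.toReal_nonneg, ENNReal.ofReal_toReal hutop]
  have hbalance : A ^ (s / (s + N)) * B ^ (1 - s / (s + N)) = u ^ s * B := by
    rw [hAu, ENNReal.mul_rpow_of_nonneg _ _ (by positivity), ← ENNReal.rpow_mul,
      mul_div_cancel₀ _ hsN.ne', mul_assoc, ← ENNReal.rpow_add _ _ hB0 hB, add_sub_cancel,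
      ENNReal.rpow_one]
  calc V ≤ u ^ (-N) * A + u ^ s * B := by
        simpa only [hc] using h u.toReal (ENNReal.toReal_pos hu0 hutop)
    _ = 2 * (A ^ (s / (s + N)) * B ^ (1 - s / (s + N))) := by
        rw [hbalance, two_mul, hAu, ← mul_assoc, ← ENNReal.rpow_add _ _ hu0 hutop,
          neg_add_cancel_comm_assoc]

variable {d : ℕ} {r p θ : ℝ} {a : Ed d → ℂ}

theorem IsSymbol0.exists_enorm_symbOp_le (ha : IsSymbol0 d a) (hd : 1 ≤ d) (hp : 1 < p)
    (hrp : d / p < r) (hθ : θ < d / 2) :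
    ∃ C : ℝ≥0, 0 < C ∧ ∀ f : 𝓢(Ed d, ℂ), ∀ x, ∀ c : ℝ, 0 < c →
      ‖symbOp d a f x‖ₑ ≤ C * (‖c‖ₑ ^ (-(d / 2 - θ)) * sobolevSemi d θ f +
        ‖c‖ₑ ^ (r - d / p) * gagliardo d r p f) := by
  obtain ⟨C₁, hlow⟩ := ha.exists_enorm_multiplierOp_truncSymbol_le hd hθ
  obtain ⟨C₂, hhigh⟩ := ha.exists_edist_multiplierOp_truncSymbol_le hp hrp
  refine ⟨C₁ + C₂ + 1, by positivity, fun f x c hc => ?_⟩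
  have hC₁ : (C₁ : ℝ≥0∞) ≤ (C₁ + C₂ + 1 : ℝ≥0) := by
    rw [add_assoc]
    exact ENNReal.coe_le_coe.mpr le_self_add
  have hC₂ : (C₂ : ℝ≥0∞) ≤ (C₁ + C₂ + 1 : ℝ≥0) :=
    ENNReal.coe_le_coe.mpr (le_add_self.trans le_self_add)
  calc ‖symbOp d a f x‖ₑ = ‖multiplierOp a f x‖ₑ := by rw [ha.symbOp_eq_multiplierOp]
    _ ≤ ‖multiplierOp (truncSymbol a c) f x‖ₑ +
          edist (multiplierOp (truncSymbol a c) f x) (multiplierOp a f x) := by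
        rw [edist_comm, edist_eq_enorm_sub]
        simpa using enorm_add_le (multiplierOp (truncSymbol a c) f x)
          (multiplierOp a f x - multiplierOp (truncSymbol a c) f x)
    _ ≤ C₁ * ‖c‖ₑ ^ (-(d / 2 - θ)) * sobolevSemi d θ f +
          C₂ * ‖c‖ₑ ^ (r - d / p) * gagliardo d r p f :=
        add_le_add (hlow f x c hc) (hhigh f x c hc)
    _ ≤ _ := by
        rw [mul_add, mul_assoc, mul_assoc]
        gcongr

theorem IsSymbol0.symbOp_eq_zero_of_sobolevSemi_eq_zero (ha : IsSymbol0 d a) (hd : 1 ≤ d)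
    (hθ : θ < d / 2) {f : 𝓢(Ed d, ℂ)} (hf : sobolevSemi d θ f = 0) (x : Ed d) :
    symbOp d a f x = 0 := by
  obtain ⟨C, hC⟩ := ha.exists_enorm_multiplierOp_truncSymbol_le hd hθ
  have hlow : ∀ c : ℝ, 0 < c → multiplierOp (truncSymbol a c) f x = 0 := fun c hc => by
    simpa [hf] using hC f x c hc
  have hlim := (ha.tendsto_multiplierOp_truncSymbol f x).mono_left
    (nhdsWithin_le_nhds (s := Set.Ioi 0))
  rw [ha.symbOp_eq_multiplierOp]
  refine tendsto_nhds_unique_of_eventuallyEq hlim tendsto_const_nhds ?_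
  filter_upwards [self_mem_nhdsWithin] with c hc using hlow c hc

theorem stmt5_general {d : ℕ} (hd : 1 ≤ d) {r p θ : ℝ} (hp : 1 < p) (hrp : d / p < r)
    (hθ : θ < d / 2) {a : Ed d → ℂ} (ha : IsSymbol0 d a) :
    ∃ C : ℝ, 0 < C ∧ ∀ f : 𝓢(Ed d, ℂ), sobolevSemi d θ f ≠ ⊤ →
      ⨆ x, ‖symbOp d a f x‖ₑ ≤ ENNReal.ofReal C *
        sobolevSemi d θ f ^ ((r - d / p) / (r - θ + d * (p - 2) / (2 * p))) *
        gagliardo d r p f ^ (1 - (r - d / p) / (r - θ + d * (p - 2) / (2 * p))) := by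
  obtain ⟨C, hC0, hC⟩ := ha.exists_enorm_symbOp_le hd hp hrp hθ
  have hexp : r - θ + d * (p - 2) / (2 * p) = r - d / p + (d / 2 - θ) := by
    field_simp
    ring
  refine ⟨C * 2, by positivity, fun f hf => iSup_le fun x => ?_⟩
  rcases eq_or_ne (sobolevSemi d θ f) 0 with hf0 | hf0
  · rw [ha.symbOp_eq_zero_of_sobolevSemi_eq_zero hd hθ hf0, enorm_zero]
    exact bot_le
  have hdiv := le_two_mul_rpow_mul_rpow_of_forall_le (sub_pos.mpr hθ) (sub_pos.mpr hrp) hf0 hf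
    fun c hc => ENNReal.div_le_of_le_mul' (hC f x c hc)
  rw [hexp, ENNReal.ofReal_mul C.coe_nonneg, ENNReal.ofReal_coe_nnreal, ENNReal.ofReal_ofNat]
  refine ((ENNReal.div_le_iff_le_mul (.inl (by simpa using hC0.ne')) (.inl ENNReal.coe_ne_top)).mp
    hdiv).trans_eq ?_
  ring

end Interpolation

/-- For a symbol `a ∈ S⁰_{ph}`, `0 < r < 1`, `2 ≤ p < ∞` with `r > d/p`,
and `γ₁ = (r − d/p)/(r + 1 + d(p−2)/(2p))`, one has the interpolation estimate
`‖𝔞[f]‖_∞ ≤ C [f]_{−1}^{γ₁} [f]_{r,p}^{1−γ₁}` for Schwartz `f` with `[f]_{−1} < ∞`. -/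
theorem stmt5 (d : ℕ) (hd : 1 ≤ d) (r p : ℝ) (hr0 : 0 < r) (hr1 : r < 1) (hp : 2 ≤ p)
    (hrp : r > d / p) (a : Ed d → ℂ) (ha : IsSymbol0 d a) :
    ∃ C : ℝ, 0 < C ∧ ∀ f : SchwartzMap (Ed d) ℂ,
      sobolevSemi d (-1) ⇑f ≠ ⊤ →
      (⨆ x, (‖symbOp d a (⇑f) x‖₊ : ℝ≥0∞))
        ≤ ENNReal.ofReal C *
            sobolevSemi d (-1) ⇑f ^ ((r - d / p) / (r + 1 + d * (p - 2) / (2 * p))) *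
            gagliardo d r p ⇑f ^ (1 - (r - d / p) / (r + 1 + d * (p - 2) / (2 * p))) := by
  simpa only [sub_neg_eq_add] using!
    stmt5_general hd (θ := -1) (by linarith) hrp (by linarith [d.cast_nonneg (α := ℝ)]) ha
end
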